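/- For every integer n ≥ 2 (with the convention Z_0(x,y) = 1), the adjacent-boundary doubly-refined ASM generating function satisfies the recursion: (z1−1)(z2−1)·Zadj_n(x,y;z1,z2)·Z_{n−2}(x,y) = y·z1·z2·Zadj_{n−1}(x,y;z1,z2)·Z_{n−1}(x,y) + (x(z1−1)(z2−1)−y)·z1·z2·Z_{n−1}(x,y;z1)·Z_{n−1}(x,y;z2) + (z1−1)(z2−1)·Z_{n−1}(x,y)·Z_{n−2}(x,y), as an identity of polynomials in ℤ[x,y,z1,z2]. -/

import Mathlib

open Finset

/-- The `n × n` integer matrix encoded by `e`, with entries in `{-1, 0, 1}`. -/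
def asmMat {n : ℕ} (e : Fin n → Fin n → Fin 3) : Fin n → Fin n → ℤ :=
  fun i j => (e i j : ℤ) - 1

/-- `A` is an alternating sign matrix: all entries lie in `{-1, 0, 1}`, every
partial row sum and every partial column sum is `0` or `1` (equivalently, the
nonzero entries of each row and of each column alternate in sign), and every
complete row sum and column sum is `1`. -/
def IsASM {n : ℕ} (A : Fin n → Fin n → ℤ) : Prop :=
  (∀ i j, A i j = -1 ∨ A i j = 0 ∨ A i j = 1) ∧
  (∀ (i j : Fin n), (∑ j' ∈ univ.filter (fun j' : Fin n => j' ≤ j), A i j') = 0 ∨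
    (∑ j' ∈ univ.filter (fun j' : Fin n => j' ≤ j), A i j') = 1) ∧
  (∀ (i j : Fin n), (∑ i' ∈ univ.filter (fun i' : Fin n => i' ≤ i), A i' j) = 0 ∨
    (∑ i' ∈ univ.filter (fun i' : Fin n => i' ≤ i), A i' j) = 1) ∧
  (∀ i : Fin n, (∑ j, A i j) = 1) ∧
  (∀ j : Fin n, (∑ i, A i j) = 1)

/-- `ν(A)`, the number of generalized inversions of `A`. -/
def nuASM {n : ℕ} (A : Fin n → Fin n → ℤ) : ℕ :=
  (∑ i : Fin n, ∑ i' : Fin n, ∑ j : Fin n, ∑ j' : Fin n,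
      if i < i' ∧ j' ≤ j then A i j * A i' j' else 0).toNat

/-- `μ(A)`, the number of entries of `A` equal to `-1`. -/
def muASM {n : ℕ} (A : Fin n → Fin n → ℤ) : ℕ :=
  (univ.filter (fun p : Fin n × Fin n => A p.1 p.2 = -1)).card

/-- `ρT(A)`, the number of `0`'s to the left of the `1` in the top row of `A`. -/
def rhoT {n : ℕ} (A : Fin n → Fin n → ℤ) : ℕ :=
  (univ.filter (fun j : Fin n =>
    A ⟨0, j.pos⟩ j = 0 ∧ ∃ j' : Fin n, j < j' ∧ A ⟨0, j.pos⟩ j' = 1)).card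

/-- `ρR(A)`, the number of `0`'s below the `1` in the right-most column of `A`. -/
def rhoR {n : ℕ} (A : Fin n → Fin n → ℤ) : ℕ :=
  (univ.filter (fun i : Fin n =>
    A i ⟨n - 1, Nat.sub_lt i.pos Nat.one_pos⟩ = 0 ∧
      ∃ i' : Fin n, i' < i ∧ A i' ⟨n - 1, Nat.sub_lt i.pos Nat.one_pos⟩ = 1)).card

/-- `ρB(A)`, the number of `0`'s to the right of the `1` in the bottom row of `A`. -/
def rhoB {n : ℕ} (A : Fin n → Fin n → ℤ) : ℕ :=
  (univ.filter (fun j : Fin n =>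
    A ⟨n - 1, Nat.sub_lt j.pos Nat.one_pos⟩ j = 0 ∧
      ∃ j' : Fin n, j' < j ∧ A ⟨n - 1, Nat.sub_lt j.pos Nat.one_pos⟩ j' = 1)).card

/-- `ρL(A)`, the number of `0`'s above the `1` in the left-most column of `A`. -/
def rhoL {n : ℕ} (A : Fin n → Fin n → ℤ) : ℕ :=
  (univ.filter (fun i : Fin n =>
    A i ⟨0, i.pos⟩ = 0 ∧ ∃ i' : Fin n, i < i' ∧ A i' ⟨0, i.pos⟩ = 1)).card

open Classical in
/-- The quadruply-refined ASM generating function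
`Zqua_n(x,y;z1,z2,z3,z4) = Σ_A x^{ν(A)} y^{μ(A)} z1^{ρT(A)} z2^{ρR(A)} z3^{ρB(A)} z4^{ρL(A)}`. -/
noncomputable def Zqua (n : ℕ) {R : Type*} [CommRing R] (x y z1 z2 z3 z4 : R) : R :=
  ∑ e : Fin n → Fin n → Fin 3,
    if IsASM (asmMat e) then
      x ^ nuASM (asmMat e) * y ^ muASM (asmMat e) * z1 ^ rhoT (asmMat e) *
        z2 ^ rhoR (asmMat e) * z3 ^ rhoB (asmMat e) * z4 ^ rhoL (asmMat e)
    else 0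

/-- Adjacent-boundary doubly-refined generating function `Zadj_n(x,y;z1,z2)`. -/
noncomputable def Zadj (n : ℕ) {R : Type*} [CommRing R] (x y z1 z2 : R) : R :=
  Zqua n x y z1 1 1 z2

/-- Alternative adjacent-boundary doubly-refined generating function `Zbaradj_n(x,y;z1,z2)`. -/
noncomputable def Zbaradj (n : ℕ) {R : Type*} [CommRing R] (x y z1 z2 : R) : R :=
  Zqua n x y z1 z2 1 1

/-- Triply-refined generating function `Ztri_n(x,y;z1,z2,z3)`. -/
noncomputable def Ztri (n : ℕ) {R : Type*} [CommRing R] (x y z1 z2 z3 : R) : R :=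
  Zqua n x y z1 1 z2 z3

/-- Opposite-boundary doubly-refined generating function `Zopp_n(x,y;z1,z2)`. -/
noncomputable def Zopp (n : ℕ) {R : Type*} [CommRing R] (x y z1 z2 : R) : R :=
  Zqua n x y z1 1 z2 1

/-- Singly-refined generating function `Z_n(x,y;z)`. -/
noncomputable def Zsing (n : ℕ) {R : Type*} [CommRing R] (x y z : R) : R :=
  Zqua n x y z 1 1 1

/-- Unrefined generating function `Z_n(x,y)`.  Note `Zun 0 x y = 1`. -/
noncomputable def Zun (n : ℕ) {R : Type*} [CommRing R] (x y : R) : R :=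
  Zqua n x y 1 1 1 1

/-- The partial sum of `f` up to and including the index `j`. -/
def psum {n : ℕ} (f : Fin n → ℤ) (j : Fin n) : ℤ :=
  ∑ j' ∈ univ.filter (fun j' : Fin n => j' ≤ j), f j'

lemma psum_zero {n : ℕ} (f : Fin (n + 1) → ℤ) : psum f 0 = f 0 := by
  simp [psum, Finset.sum_filter]

lemma psum_succ {n : ℕ} (f : Fin (n + 1) → ℤ) (j : Fin n) :
    psum f j.succ = f 0 + psum (fun k => f k.succ) j := by
  simp only [psum, Finset.sum_filter, Fin.sum_univ_succ, Fin.succ_le_succ_iff]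
  simp

lemma psum_last {n : ℕ} (f : Fin (n + 1) → ℤ) : psum f (Fin.last n) = ∑ j, f j := by
  simp [psum, Fin.le_last]

lemma psum_succ_eq_add {n : ℕ} (f : Fin (n + 1) → ℤ) (j : Fin n) :
    psum f j.succ = psum f j.castSucc + f j.succ := by
  induction n with
  | zero => exact j.elim0
  | succ n ih =>
    refine Fin.cases ?_ (fun j => ?_) j
    · rw [psum_succ, psum_zero, Fin.castSucc_zero, psum_zero]
    · rw [psum_succ, ih, Fin.castSucc_succ, psum_succ]; ring

/-- Partial row sums. -/
def rowSum {n m : ℕ} (A : Fin n → Fin m → ℤ) (i : Fin n) (j : Fin m) : ℤ := psum (A i) j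

/-- Partial column sums. -/
def colSum {n m : ℕ} (A : Fin n → Fin m → ℤ) (i : Fin n) (j : Fin m) : ℤ :=
  psum (fun k => A k j) i

lemma isASM_iff {n : ℕ} (A : Fin n → Fin n → ℤ) :
    IsASM A ↔ (∀ i j, rowSum A i j = 0 ∨ rowSum A i j = 1) ∧
      (∀ i j, colSum A i j = 0 ∨ colSum A i j = 1) ∧
      (∀ i, ∑ j, A i j = 1) ∧ (∀ j, ∑ i, A i j = 1) := by
  refine ⟨fun h => h.2, fun h => ⟨fun i j => ?_, h⟩⟩
  obtain ⟨m, rfl⟩ : ∃ m, n = m + 1 := ⟨n - 1, by have := i.pos; omega⟩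
  have h1 := h.1 i
  simp only [rowSum] at h1
  refine Fin.cases ?_ (fun j => ?_) j
  · have := h1 0
    rw [psum_zero] at this
    omega
  · have e := psum_succ_eq_add (A i) j
    have := h1 j.succ
    have := h1 j.castSucc
    omega

open Classical in
/-- The finite set of alternating sign matrices of size `n`. -/
noncomputable def asmSet (n : ℕ) : Finset (Fin n → Fin n → ℤ) :=
  (univ.filter fun e : Fin n → Fin n → Fin 3 => IsASM (asmMat e)).image asmMat

lemma asmMat_injective {n : ℕ} : Function.Injective (asmMat (n := n)) := by
  intro e e' h
  ext i j
  have := congrFun (congrFun h i) j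
  simp only [asmMat] at this
  omega

lemma mem_asmSet {n : ℕ} {A : Fin n → Fin n → ℤ} : A ∈ asmSet n ↔ IsASM A := by
  simp only [asmSet, mem_image, mem_filter, mem_univ, true_and]
  constructor
  · rintro ⟨e, he, rfl⟩
    exact he
  · intro h
    have he : asmMat (fun i j => ⟨(A i j + 1).toNat, by have := h.1 i j; omega⟩) = A := by
      funext i j
      have := h.1 i j
      simp only [asmMat]
      omega
    exact ⟨_, by rw [he]; exact h, he⟩

lemma Zqua_eq_sum_asmSet (n : ℕ) {R : Type*} [CommRing R] (x y z1 z2 z3 z4 : R) :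
    Zqua n x y z1 z2 z3 z4 = ∑ A ∈ asmSet n, x ^ nuASM A * y ^ muASM A * z1 ^ rhoT A *
        z2 ^ rhoR A * z3 ^ rhoB A * z4 ^ rhoL A := by
  classical
  rw [Zqua, asmSet, Finset.sum_image (fun _ _ _ _ h => asmMat_injective h), Finset.sum_filter]

/-- The six-vertex weight of an entry `a` with row partial sum `h` and column partial sum `v`. -/
def vertex {R : Type*} [CommRing R] (a1 a0 b c : R) (a h v : ℤ) : R :=
  if a = 1 then 1 else if a = -1 then c else if h = v then (if h = 1 then a1 else a0) else b

/-- The six-vertex partition function with domain wall boundary and site-dependent weights. -/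
noncomputable def partFun (n : ℕ) {R : Type*} [CommRing R] (a1 a0 b c : Fin n → Fin n → R) : R :=
  ∑ A ∈ asmSet n, ∏ i, ∏ j,
    vertex (a1 i j) (a0 i j) (b i j) (c i j) (A i j) (rowSum A i j) (colSum A i j)

/-- The matrix `B` bordered by a first row and a first column `(1, 0, …, 0)`. -/
def borderOne {n : ℕ} (B : Fin n → Fin n → ℤ) : Fin (n + 1) → Fin (n + 1) → ℤ :=
  Fin.cons (Fin.cons 1 fun _ => 0) fun i => Fin.cons 0 (B i)

section bordered
variable {n : ℕ} (B : Fin n → Fin n → ℤ)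

@[simp] lemma borderOne_zero_zero : borderOne B 0 0 = 1 := rfl
@[simp] lemma borderOne_zero_succ (j : Fin n) : borderOne B 0 j.succ = 0 := rfl
@[simp] lemma borderOne_succ_zero (i : Fin n) : borderOne B i.succ 0 = 0 := rfl
@[simp] lemma borderOne_succ_succ (i j : Fin n) : borderOne B i.succ j.succ = B i j := rfl

lemma psum_zero_fun {m : ℕ} (j : Fin m) : psum (fun _ => 0) j = 0 := by simp [psum]

@[simp] lemma rowSum_borderOne_zero (j : Fin (n + 1)) : rowSum (borderOne B) 0 j = 1 := by
  refine Fin.cases ?_ (fun j => ?_) j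
  · simp [rowSum, psum_zero]
  · simp [rowSum, psum_succ, psum_zero_fun]

@[simp] lemma colSum_borderOne_zero (i : Fin (n + 1)) : colSum (borderOne B) i 0 = 1 := by
  refine Fin.cases ?_ (fun j => ?_) i
  · simp [colSum, psum_zero]
  · simp [colSum, psum_succ, psum_zero_fun]

@[simp] lemma rowSum_borderOne_succ_zero (i : Fin n) : rowSum (borderOne B) i.succ 0 = 0 := by
  simp [rowSum, psum_zero]

@[simp] lemma colSum_borderOne_zero_succ (j : Fin n) : colSum (borderOne B) 0 j.succ = 0 := by
  simp [colSum, psum_zero]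

@[simp] lemma rowSum_borderOne_succ_succ (i j : Fin n) :
    rowSum (borderOne B) i.succ j.succ = rowSum B i j := by
  simp [rowSum, psum_succ]

@[simp] lemma colSum_borderOne_succ_succ (i j : Fin n) :
    colSum (borderOne B) i.succ j.succ = colSum B i j := by
  simp [colSum, psum_succ]

lemma isASM_borderOne : IsASM (borderOne B) ↔ IsASM B := by
  rw [isASM_iff, isASM_iff]
  simp [Fin.forall_fin_succ, Fin.sum_univ_succ]

end bordered

section firstRow
variable {n : ℕ} {A : Fin (n + 1) → Fin (n + 1) → ℤ}

lemma IsASM.zero_row (hA : IsASM A) (j : Fin (n + 1)) : A 0 j = 0 ∨ A 0 j = 1 := by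
  have := (((isASM_iff A).1 hA).2.1 0 j)
  rwa [colSum, psum_zero] at this

lemma IsASM.zero_col (hA : IsASM A) (i : Fin (n + 1)) : A i 0 = 0 ∨ A i 0 = 1 := by
  have := (((isASM_iff A).1 hA).1 i 0)
  rwa [rowSum, psum_zero] at this

lemma IsASM.eq_borderOne (hA : IsASM A) (h : A 0 0 = 1) : A = borderOne fun i j => A i.succ j.succ := by
  have hr : ∀ j : Fin n, A 0 j.succ = 0 := by
    have h1 := ((isASM_iff A).1 hA).2.2.1 0
    rw [Fin.sum_univ_succ, h, add_eq_left,
      Finset.sum_eq_zero_iff_of_nonneg (fun j _ => by have := hA.zero_row j.succ; omega)] at h1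
    exact fun j => h1 j (mem_univ _)
  have hc : ∀ i : Fin n, A i.succ 0 = 0 := by
    have h1 := ((isASM_iff A).1 hA).2.2.2 0
    rw [Fin.sum_univ_succ, h, add_eq_left,
      Finset.sum_eq_zero_iff_of_nonneg (fun j _ => by have := hA.zero_col j.succ; omega)] at h1
    exact fun j => h1 j (mem_univ _)
  funext i j
  refine Fin.cases ?_ (fun i => ?_) i <;> refine Fin.cases ?_ (fun j => ?_) j <;> simp [*]

end firstRow

section domainWall
variable {R : Type*} [CommRing R]

lemma vertex_one (a1 a0 b c : R) (h v : ℤ) : vertex a1 a0 b c 1 h v = 1 := by simp [vertex]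

lemma sum_asmSet_filter_eq_one (n : ℕ) (a1 a0 b c : Fin (n + 1) → Fin (n + 1) → R) :
    ∑ A ∈ asmSet (n + 1) with A 0 0 = 1, ∏ i, ∏ j,
      vertex (a1 i j) (a0 i j) (b i j) (c i j) (A i j) (rowSum A i j) (colSum A i j) =
    (∏ j : Fin n, b 0 j.succ) * (∏ i : Fin n, b i.succ 0) *
      partFun n (fun i j => a1 i.succ j.succ) (fun i j => a0 i.succ j.succ)
        (fun i j => b i.succ j.succ) (fun i j => c i.succ j.succ) := by
  rw [partFun, Finset.mul_sum]
  refine Finset.sum_nbij' (fun A i j => A i.succ j.succ) borderOne ?_ ?_ ?_ ?_ ?_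
  · intro A hA
    rw [mem_filter, mem_asmSet] at hA
    rw [mem_asmSet, ← isASM_borderOne, ← hA.1.eq_borderOne hA.2]
    exact hA.1
  · intro B hB
    rw [mem_filter, mem_asmSet, isASM_borderOne, ← mem_asmSet]
    exact ⟨hB, rfl⟩
  · intro A hA
    rw [mem_filter, mem_asmSet] at hA
    exact (hA.1.eq_borderOne hA.2).symm
  · intro B _
    rfl
  · intro A hA
    rw [mem_filter, mem_asmSet] at hA
    have h := hA.1.eq_borderOne hA.2
    generalize hB : (fun i j => A (Fin.succ i) (Fin.succ j)) = B at h ⊢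
    subst h
    rw [Fin.prod_univ_succ, Fin.prod_univ_succ]
    simp_rw [Fin.prod_univ_succ (n := n) (fun j : Fin (n + 1) => vertex _ _ _ _ (borderOne B _ j) _ _)]
    simp [vertex, Finset.prod_mul_distrib]
    ring

lemma partFun_map {S : Type*} [CommRing S] (f : R →+* S) (n : ℕ) (a1 a0 b c : Fin n → Fin n → R) :
    f (partFun n a1 a0 b c) = partFun n (fun i j => f (a1 i j)) (fun i j => f (a0 i j))
      (fun i j => f (b i j)) (fun i j => f (c i j)) := by
  simp only [partFun, map_sum, map_prod]
  refine Finset.sum_congr rfl fun A _ => Finset.prod_congr rfl fun i _ =>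
    Finset.prod_congr rfl fun j _ => ?_
  simp only [vertex, apply_ite f, map_one]

/-- The inhomogeneous domain wall partition function with row parameters `u` and column
parameters `v`. -/
noncomputable def dwbc (p : R) {n : ℕ} (u v : Fin n → R) : R :=
  partFun n (fun i j => p * (u i - v j)) (fun i j => u i - v j) (fun i j => p * u i - v j)
    (fun i j => (p - 1) ^ 2 * u i * v j)

lemma dwbc_map {S : Type*} [CommRing S] (f : R →+* S) (p : R) {n : ℕ} (u v : Fin n → R) :
    f (dwbc p u v) = dwbc (f p) (fun i => f (u i)) (fun i => f (v i)) := by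
  simp only [dwbc, partFun_map, map_sub, map_mul, map_pow, map_one]

/-- At coinciding first parameters the configurations freeze. -/
lemma dwbc_freeze (p w : R) {n : ℕ} (u v : Fin n → R) :
    dwbc p (Fin.cons w u : Fin (n + 1) → R) (Fin.cons w v) =
      (∏ j, (p * w - v j)) * (∏ i, (p * u i - w)) * dwbc p u v := by
  have h := sum_asmSet_filter_eq_one n
    (fun i j => p * ((Fin.cons w u : Fin (n + 1) → R) i - (Fin.cons w v : Fin (n + 1) → R) j))
    (fun i j => (Fin.cons w u : Fin (n + 1) → R) i - (Fin.cons w v : Fin (n + 1) → R) j)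
    (fun i j => p * (Fin.cons w u : Fin (n + 1) → R) i - (Fin.cons w v : Fin (n + 1) → R) j)
    (fun i j => (p - 1) ^ 2 * (Fin.cons w u : Fin (n + 1) → R) i *
      (Fin.cons w v : Fin (n + 1) → R) j)
  simp only [Fin.cons_zero, Fin.cons_succ] at h
  rw [dwbc, dwbc, ← h, partFun, Finset.sum_filter]
  refine Finset.sum_congr rfl fun A hA => ?_
  split_ifs with h0
  · rfl
  · rw [mem_asmSet] at hA
    have h1 : A 0 0 = 0 := (hA.zero_row 0).resolve_right h0
    have h2 : rowSum A 0 0 = 0 := by rw [rowSum, psum_zero, h1]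
    have h3 : colSum A 0 0 = 0 := by rw [colSum, psum_zero, h1]
    refine Finset.prod_eq_zero (mem_univ 0) (Finset.prod_eq_zero (mem_univ 0) ?_)
    simp [vertex, h1, h2, h3]

end domainWall

section exchange
variable {R : Type*} [CommRing R]

/-- The six-vertex weight in terms of the states of the left, top, right, bottom edges. -/
def edgeWeight (p u v : R) : Bool → Bool → Bool → Bool → R
  | false, false, false, false => u - v
  | true, true, true, true => p * (u - v)
  | true, false, true, false => p * u - v
  | false, true, false, true => p * u - v
  | false, false, true, true => 1
  | true, true, false, false => (p - 1) ^ 2 * u * v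
  | _, _, _, _ => 0

/-- The intertwining weight of two columns with parameters `v` and `w`. -/
def crossWeight (p v w : R) : Bool → Bool → Bool → Bool → R
  | false, false, false, false => p * w - v
  | true, true, true, true => p * w - v
  | false, true, false, true => (p - 1) * v
  | true, false, true, false => (p - 1) * w
  | false, true, true, false => p * (w - v)
  | true, false, false, true => w - v
  | _, _, _, _ => 0

lemma yangBaxter (p u v w : R) (l r t t' b b' : Bool) :
    ∑ m, ∑ m', crossWeight p v w t t' m m' *
        ∑ k, edgeWeight p u v l m k b * edgeWeight p u w k m' r b' =
      ∑ m, ∑ m', (∑ k, edgeWeight p u w l t k m * edgeWeight p u v k t' r m') *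
        crossWeight p v w m m' b b' := by
  cases l <;> cases r <;> cases t <;> cases t' <;> cases b <;> cases b' <;>
    simp only [Fintype.sum_bool, edgeWeight, crossWeight] <;> ring

/-- The transfer weight of a column, with top edge `t`, bottom edge `b`, left edges `h` and
right edges `h'`. -/
def colWeight (p : R) : (n : ℕ) → (Fin n → R) → R → Bool → Bool → (Fin n → Bool) →
    (Fin n → Bool) → R
  | 0, _, _, t, b, _, _ => if t = b then 1 else 0
  | n + 1, u, v, t, b, h, h' => ∑ m, edgeWeight p (u 0) v (h 0) t (h' 0) m *
      colWeight p n (Fin.tail u) v m b (Fin.tail h) (Fin.tail h')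

lemma sum_fin_succ_fun {α M : Type*} [Fintype α] [AddCommMonoid M] {n : ℕ}
    (f : (Fin (n + 1) → α) → M) :
    ∑ k, f k = ∑ a, ∑ k : Fin n → α, f (Fin.cons a k) := by
  rw [← (Fin.consEquiv fun _ => α).sum_comp, Fintype.sum_prod_type]
  rfl

lemma intertwine_comp {C E E' X' : Bool → Bool → Bool → Bool → R} {X : Bool → Bool → R}
    {t t' b b' : Bool}
    (h : ∀ s s', ∑ m, ∑ m', C t t' m m' * E m m' s s' = ∑ m, ∑ m', E' t t' m m' * C m m' s s')
    (h' : ∀ s s', ∑ m, ∑ m', C s s' m m' * X m m' = ∑ m, ∑ m', X' s s' m m' * C m m' b b') :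
    ∑ m, ∑ m', C t t' m m' * ∑ s, ∑ s', E m m' s s' * X s s' =
      ∑ m, ∑ m', (∑ s, ∑ s', E' t t' s s' * X' s s' m m') * C m m' b b' := by
  simp only [Fintype.sum_bool] at h h' ⊢
  linear_combination X true true * h true true + X true false * h true false +
    X false true * h false true + X false false * h false false +
    E' t t' true true * h' true true + E' t t' true false * h' true false +
    E' t t' false true * h' false true + E' t t' false false * h' false false

lemma colWeight_yangBaxter (p v w : R) {n : ℕ} (u : Fin n → R) (t t' b b' : Bool)
    (h h' : Fin n → Bool) :
    ∑ m, ∑ m', crossWeight p v w t t' m m' *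
        ∑ k, colWeight p n u v m b h k * colWeight p n u w m' b' k h' =
      ∑ m, ∑ m', (∑ k, colWeight p n u w t m h k * colWeight p n u v t' m' k h') *
        crossWeight p v w m m' b b' := by
  induction n generalizing t t' b b' with
  | zero =>
    cases t <;> cases t' <;> cases b <;> cases b' <;>
      simp [colWeight, crossWeight]
  | succ n ih =>
    have key : ∀ (x y : R) (m m' c c' : Bool),
        ∑ k, colWeight p (n + 1) u x m c h k * colWeight p (n + 1) u y m' c' k h' =
        ∑ s, ∑ s', (∑ k, edgeWeight p (u 0) x (h 0) m k s * edgeWeight p (u 0) y k m' (h' 0) s') *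
          ∑ k, colWeight p n (Fin.tail u) x s c (Fin.tail h) k *
            colWeight p n (Fin.tail u) y s' c' k (Fin.tail h') := by
      intro x y m m' c c'
      rw [sum_fin_succ_fun]
      simp only [colWeight, Fin.cons_zero, Fin.tail_cons, Fintype.sum_bool, add_mul, mul_add,
        Finset.sum_add_distrib, Finset.mul_sum]
      simp only [← Finset.sum_add_distrib]
      refine Finset.sum_congr rfl fun k _ => ?_
      ring
    simp only [key]
    have yb := fun s s' => yangBaxter p (u 0) v w (h 0) (h' 0) t t' s s'
    have ih' := fun s s' => ih (Fin.tail u) s s' b b' (Fin.tail h) (Fin.tail h')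
    exact intertwine_comp (C := crossWeight p v w)
      (E := fun m m' s s' => ∑ k, edgeWeight p (u 0) v (h 0) m k s *
        edgeWeight p (u 0) w k m' (h' 0) s')
      (E' := fun m m' s s' => ∑ k, edgeWeight p (u 0) w (h 0) m k s *
        edgeWeight p (u 0) v k m' (h' 0) s')
      (X := fun s s' => ∑ k, colWeight p n (Fin.tail u) v s b (Fin.tail h) k *
        colWeight p n (Fin.tail u) w s' b' k (Fin.tail h'))
      (X' := fun s s' c c' => ∑ k, colWeight p n (Fin.tail u) w s c (Fin.tail h) k *
        colWeight p n (Fin.tail u) v s' c' k (Fin.tail h')) yb ih'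

/-- Edge configurations around a domain wall are weighted by products of column transfers. -/
def dwbcColumns (p : R) {n : ℕ} (u : Fin n → R) : List R → (Fin n → Bool) → R
  | [], h => if h = fun _ => true then 1 else 0
  | v :: vs, h => ∑ k, colWeight p n u v false true h k * dwbcColumns p u vs k

lemma dwbcColumns_perm [IsDomain R] (p : R) {n : ℕ} (u : Fin n → R) {l l' : List R}
    (hl : l.Perm l') (hp : ∀ v ∈ l, ∀ w ∈ l, p * w - v ≠ 0) (h : Fin n → Bool) :
    dwbcColumns p u l h = dwbcColumns p u l' h := by
  induction hl generalizing h with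
  | nil => rfl
  | cons x hl ih =>
    simp only [dwbcColumns]
    exact Finset.sum_congr rfl fun k _ => by
      rw [ih fun v hv w hw => hp v (List.mem_cons_of_mem _ hv) w (List.mem_cons_of_mem _ hw)]
  | swap v w l =>
    have assoc : ∀ x y, dwbcColumns p u (x :: y :: l) h =
        ∑ k, (∑ m, colWeight p n u x false true h m * colWeight p n u y false true m k) *
          dwbcColumns p u l k := by
      intro x y
      simp only [dwbcColumns, Finset.mul_sum, Finset.sum_mul]
      rw [Finset.sum_comm]
      simp only [mul_assoc]
    rw [assoc, assoc]
    refine Finset.sum_congr rfl fun k _ => ?_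
    congr 1
    have yb := colWeight_yangBaxter p v w u false false true true h k
    simp only [crossWeight, Fintype.sum_bool, zero_mul, mul_zero, add_zero, zero_add] at yb
    rw [mul_comm] at yb
    exact (mul_right_cancel₀ (hp v (by simp) w (by simp)) yb).symm
  | trans h1 h2 ih1 ih2 =>
    rw [ih1 hp, ih2 fun v hv w hw => hp v (h1.mem_iff.2 hv) w (h1.mem_iff.2 hw)]

end exchange

section symmetry
variable {R : Type*} [CommRing R]

lemma colWeight_eq_sum (p : R) {n : ℕ} (u : Fin n → R) (v : R) (t b : Bool)
    (h h' : Fin n → Bool) :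
    colWeight p n u v t b h h' = ∑ M : Fin n → Bool,
      (if (Fin.cons t M : Fin (n + 1) → Bool) (Fin.last n) = b then 1 else 0) *
        ∏ i, edgeWeight p (u i) v (h i) ((Fin.cons t M : Fin (n + 1) → Bool) i.castSucc)
          (h' i) (M i) := by
  induction n generalizing t with
  | zero => simp [colWeight]
  | succ n ih =>
    rw [sum_fin_succ_fun]
    simp only [colWeight, ih, Fin.prod_univ_succ, ← Fin.succ_last, ← Fin.succ_castSucc,
      Fin.cons_succ, Fin.castSucc_zero, Fin.cons_zero, Finset.mul_sum, Fin.tail]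
    exact Finset.sum_congr rfl fun m _ => Finset.sum_congr rfl fun M _ => by ring

lemma dwbcColumns_eq_sum (p : R) {n m : ℕ} (u : Fin n → R) (v : Fin m → R) (h : Fin n → Bool) :
    dwbcColumns p u (List.ofFn v) h = ∑ K : Fin m → Fin n → Bool,
      (if (Fin.cons h K : Fin (m + 1) → Fin n → Bool) (Fin.last m) = fun _ => true
        then 1 else 0) *
        ∏ j, colWeight p n u (v j) false true
          ((Fin.cons h K : Fin (m + 1) → Fin n → Bool) j.castSucc) (K j) := by
  induction m generalizing h with
  | zero => simp [dwbcColumns]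
  | succ m ih =>
    rw [sum_fin_succ_fun]
    simp only [List.ofFn_succ, dwbcColumns, ih, Fin.prod_univ_succ, ← Fin.succ_last,
      ← Fin.succ_castSucc, Fin.cons_succ, Fin.castSucc_zero, Fin.cons_zero, Finset.mul_sum]
    exact Finset.sum_congr rfl fun k _ => Finset.sum_congr rfl fun K _ => by ring

lemma cons_decide_psum {n : ℕ} (f : Fin n → ℤ) (j : Fin n) :
    (Fin.cons false (fun j => decide (psum f j = 1)) : Fin (n + 1) → Bool) j.castSucc =
      decide (psum f j - f j = 1) := by
  obtain ⟨m, rfl⟩ : ∃ m, n = m + 1 := ⟨n - 1, by have := j.pos; omega⟩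
  refine Fin.cases ?_ (fun j => ?_) j
  · simp [psum_zero]
  · rw [psum_succ_eq_add, ← Fin.succ_castSucc, Fin.cons_succ]; simp

lemma psum_sub_self {n : ℕ} {f : Fin n → ℤ} (hf : ∀ j, psum f j = 0 ∨ psum f j = 1) (j : Fin n) :
    psum f j - f j = 0 ∨ psum f j - f j = 1 := by
  obtain ⟨m, rfl⟩ : ∃ m, n = m + 1 := ⟨n - 1, by have := j.pos; omega⟩
  revert j
  refine Fin.cases ?_ (fun j => ?_)
  · simp [psum_zero]
  · rw [psum_succ_eq_add]; simpa using hf j.castSucc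

lemma psum_injective {n : ℕ} : Function.Injective (psum (n := n)) := by
  intro f g h
  funext j
  obtain ⟨m, rfl⟩ : ∃ m, n = m + 1 := ⟨n - 1, by have := j.pos; omega⟩
  revert j
  refine Fin.cases ?_ (fun j => ?_)
  · simpa [psum_zero] using congrFun h 0
  · have h1 := congrFun h j.succ
    have h2 := congrFun h j.castSucc
    rw [psum_succ_eq_add, psum_succ_eq_add] at h1
    omega

lemma psum_telescope {n : ℕ} (c : Fin (n + 1) → ℤ) (j : Fin n) :
    psum (fun j => c j.succ - c j.castSucc) j = c j.succ - c 0 := by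
  induction n with
  | zero => exact j.elim0
  | succ n ih =>
    refine Fin.cases ?_ (fun j => ?_) j
    · simp [psum_zero]
    · have := ih (fun k => c k.succ) j
      simp only [Fin.succ_castSucc] at this
      rw [psum_succ, this]
      simp

lemma sum_telescope {n : ℕ} (c : Fin (n + 1) → ℤ) :
    ∑ j : Fin n, (c j.succ - c j.castSucc) = c (Fin.last n) - c 0 := by
  cases n with
  | zero => simp
  | succ n => rw [← psum_last, psum_telescope, Fin.succ_last]

lemma vertex_eq_edgeWeight (p u v : R) {a h w : ℤ} (hh : h = 0 ∨ h = 1) (hw : w = 0 ∨ w = 1)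
    (hh' : h - a = 0 ∨ h - a = 1) (hw' : w - a = 0 ∨ w - a = 1) :
    vertex (p * (u - v)) (u - v) (p * u - v) ((p - 1) ^ 2 * u * v) a h w =
      edgeWeight p u v (decide (h - a = 1)) (decide (w - a = 1)) (decide (h = 1))
        (decide (w = 1)) := by
  obtain rfl | rfl | rfl : a = -1 ∨ a = 0 ∨ a = 1 := by omega
  all_goals
    rcases hh with rfl | rfl <;> rcases hw with rfl | rfl <;>
      simp_all [vertex, edgeWeight]

lemma sub_eq_sub_of_edgeWeight_ne_zero (p u v : R) {l t r b : Bool}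
    (h : edgeWeight p u v l t r b ≠ 0) :
    (if r then 1 else 0 : ℤ) - (if l then 1 else 0) =
      (if b then 1 else 0) - (if t then 1 else 0) := by
  cases l <;> cases t <;> cases r <;> cases b <;> simp_all [edgeWeight]

lemma dwbc_eq_dwbcColumns (p : R) {n : ℕ} (u v : Fin n → R) :
    dwbc p u v = dwbcColumns p u (List.ofFn v) fun _ => false := by
  rw [dwbcColumns_eq_sum]
  simp only [colWeight_eq_sum, Finset.prod_univ_sum, Fintype.piFinset_univ, Finset.mul_sum]
  rw [← Fintype.sum_prod_type', dwbc, partFun]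
  refine Finset.sum_of_injOn (fun A => (fun j i => decide (rowSum A i j = 1),
    fun j i => decide (colSum A i j = 1))) ?_ (fun _ _ => by simp) ?_ ?_
  · intro A hA A' hA' h
    rw [mem_coe, mem_asmSet, isASM_iff] at hA hA'
    funext i
    refine psum_injective (funext fun j => ?_)
    have := congrFun (congrFun (congrArg Prod.fst h) j) i
    simp only [decide_eq_decide] at this
    have h1 := hA.1 i j
    have h2 := hA'.1 i j
    change rowSum A i j = rowSum A' i j
    omega
  · rintro ⟨K, M⟩ _ hKM
    by_contra hne
    refine hKM ?_
    dsimp only at hne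
    obtain ⟨hK, hP⟩ := ne_zero_and_ne_zero_of_mul hne
    have hP' := fun j h => hP (Finset.prod_eq_zero (mem_univ j) h)
    replace hK := of_not_not fun h => hK (if_neg h)
    have hM := fun j => of_not_not fun h => hP' j (by rw [if_neg h, zero_mul])
    have hE := fun j i => sub_eq_sub_of_edgeWeight_ne_zero _ _ _ fun h =>
      hP' j (by rw [Finset.prod_eq_zero (mem_univ i) h, mul_zero])
    clear hne hP hP'
    set val : Bool → ℤ := fun b => if b then 1 else 0 with hval
    set cK : Fin (n + 1) → Fin n → Bool := Fin.cons (fun _ => false) K with hcK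
    set cM : Fin n → Fin (n + 1) → Bool := fun j => Fin.cons false (M j) with hcM
    set A : Fin n → Fin n → ℤ := fun i j => val (cK j.succ i) - val (cK j.castSucc i) with hA
    have hA' : ∀ j, (fun i => A i j) = fun i => val (cM j i.succ) - val (cM j i.castSucc) := by
      intro j
      funext i
      exact hE j i
    have hr : ∀ i j, rowSum A i j = val (K j i) := by
      intro i j
      rw [rowSum, hA, psum_telescope (fun j => val (cK j i))]
      simp [hcK, hval]
    have hc : ∀ i j, colSum A i j = val (M j i) := by
      intro i j
      rw [colSum, hA' j, psum_telescope (fun i => val (cM j i))]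
      simp [hcM, hval]
    have hv : ∀ b, val b = 0 ∨ val b = 1 := by simp [hval]
    have hd : ∀ b, decide (val b = 1) = b := by simp [hval]
    refine ⟨A, ?_, ?_⟩
    · rw [mem_coe, mem_asmSet, isASM_iff]
      refine ⟨fun i j => by rw [hr]; exact hv _, fun i j => by rw [hc]; exact hv _,
        fun i => ?_, fun j => ?_⟩
      · rw [hA, sum_telescope (fun j => val (cK j i)), hK]
        simp [hcK, hval]
      · rw [hA' j, sum_telescope (fun i => val (cM j i)),
          show cM j (Fin.last n) = true from hM j]
        simp [hcM, hval]
    · simp only [hr, hc, hd]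
  · intro A hA
    rw [mem_asmSet, isASM_iff] at hA
    have hcons : ∀ (j : Fin n) (i : Fin n),
        (Fin.cons (fun _ => false) (fun j i => decide (rowSum A i j = 1)) :
          Fin (n + 1) → Fin n → Bool) j.castSucc i = decide (rowSum A i j - A i j = 1) := by
      intro j i
      rw [rowSum, ← cons_decide_psum]
      obtain ⟨m, rfl⟩ : ∃ m, n = m + 1 := ⟨n - 1, by have := j.pos; omega⟩
      refine Fin.cases ?_ (fun j => ?_) j
      · rfl
      · rfl
    have hcons' : ∀ (j : Fin n) (i : Fin n),
        (Fin.cons false (fun i => decide (colSum A i j = 1)) :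
          Fin (n + 1) → Bool) i.castSucc = decide (colSum A i j - A i j = 1) := by
      intro j i
      exact cons_decide_psum (fun i => A i j) i
    have hlast : (Fin.cons (fun _ => false) (fun j i => decide (rowSum A i j = 1)) :
          Fin (n + 1) → Fin n → Bool) (Fin.last n) = fun _ => true := by
      funext i
      obtain ⟨m, rfl⟩ : ∃ m, n = m + 1 := ⟨n - 1, by have := i.pos; omega⟩
      rw [← Fin.succ_last, Fin.cons_succ, rowSum, psum_last, hA.2.2.1]
      rfl
    have hlast' : ∀ j, (Fin.cons false (fun i => decide (colSum A i j = 1)) :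
          Fin (n + 1) → Bool) (Fin.last n) = true := by
      intro j
      obtain ⟨m, rfl⟩ : ∃ m, n = m + 1 := ⟨n - 1, by have := j.pos; omega⟩
      rw [← Fin.succ_last, Fin.cons_succ, colSum, psum_last, hA.2.2.2]
      rfl
    dsimp only
    rw [if_pos hlast, one_mul, Finset.prod_comm]
    refine Finset.prod_congr rfl fun j _ => ?_
    rw [if_pos (hlast' j), one_mul]
    refine Finset.prod_congr rfl fun i _ => ?_
    rw [hcons, hcons']
    exact vertex_eq_edgeWeight p (u i) (v j) (hA.1 i j) (hA.2.1 i j)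
      (psum_sub_self (hA.1 i) j) (psum_sub_self (fun i => hA.2.1 i j) i)

/-- The partition function is symmetric in the column parameters. -/
lemma dwbc_comp_perm [IsDomain R] (p : R) {n : ℕ} (u v : Fin n → R) (σ : Equiv.Perm (Fin n))
    (hp : ∀ i j, p * v i - v j ≠ 0) : dwbc p u (v ∘ σ) = dwbc p u v := by
  rw [dwbc_eq_dwbcColumns, dwbc_eq_dwbcColumns]
  refine dwbcColumns_perm p u (Equiv.Perm.ofFn_comp_perm σ v) ?_ _
  simp only [List.mem_ofFn]
  rintro _ ⟨i, rfl⟩ _ ⟨j, rfl⟩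
  exact hp _ _

end symmetry

section degree
variable {K : Type*} [Field K]
open Polynomial

lemma natDegree_dwbc_le (p : K) {n : ℕ} (u : Fin n → K) (v : Fin (n + 1) → K) :
    (dwbc (C p) (Fin.cons X (fun i => C (u i)) : Fin (n + 1) → K[X])
      (fun j => C (v j))).natDegree ≤ n := by
  rw [dwbc, partFun]
  refine natDegree_sum_le_of_forall_le _ _ fun A hA => ?_
  rw [mem_asmSet] at hA
  rw [Fin.prod_univ_succ]
  refine natDegree_mul_le.trans ?_
  refine (add_le_add (b := n) (d := 0) ?_ ?_).trans_eq (add_zero n)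
  · obtain ⟨j, hj⟩ : ∃ j, A 0 j = 1 := by
      by_contra! h
      have h1 := ((isASM_iff A).1 hA).2.2.1 0
      rw [Finset.sum_eq_zero fun j _ => (hA.zero_row j).resolve_right (h j)] at h1
      exact zero_ne_one h1
    rw [← Finset.mul_prod_erase _ _ (mem_univ j), hj, vertex_one, one_mul]
    refine (natDegree_prod_le _ _).trans ((Finset.sum_le_card_nsmul _ _ 1 fun k _ => ?_).trans ?_)
    · have := hA.zero_row k
      have h1 : A 0 k ≠ -1 := by omega
      simp only [vertex, h1, if_false, Fin.cons_zero]
      split_ifs <;> compute_degree!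
    · simp
  · refine (natDegree_prod_le _ _).trans (Finset.sum_nonpos fun i _ => ?_)
    refine (natDegree_prod_le _ _).trans (Finset.sum_nonpos fun j _ => ?_)
    simp only [Fin.cons_succ]
    unfold vertex
    split_ifs <;> compute_degree

lemma eval_dwbc_cons (p : K) {n : ℕ} (u : Fin n → K) (v : Fin (n + 1) → K) (r : K) :
    (dwbc (C p) (Fin.cons X (fun i => C (u i)) : Fin (n + 1) → K[X])
      (fun j => C (v j))).eval r = dwbc p (Fin.cons r u : Fin (n + 1) → K) v := by
  rw [← coe_evalRingHom, dwbc_map]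
  simp only [coe_evalRingHom, eval_C]
  congr 1
  funext i
  refine Fin.cases ?_ (fun i => ?_) i <;> simp

end degree

section izergin
variable {R : Type*} [CommRing R]

lemma det_vandermonde_cons {n : ℕ} (r : R) (u : Fin n → R) :
    (Matrix.vandermonde (Fin.cons r u : Fin (n + 1) → R)).det =
      (∏ i, (u i - r)) * (Matrix.vandermonde u).det := by
  rw [Matrix.det_vandermonde, Matrix.det_vandermonde, Fin.prod_univ_succ, Fin.prod_Ioi_zero]
  simp

lemma comp_cycleRange_symm {α : Type*} {n : ℕ} (v : Fin (n + 1) → α) (j : Fin (n + 1)) :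
    v ∘ j.cycleRange.symm = Fin.cons (v j) (v ∘ j.succAbove) := by
  funext k
  refine Fin.cases ?_ (fun k => ?_) k <;> simp

lemma det_vandermonde_eq_succAbove {n : ℕ} (v : Fin (n + 1) → R) (j : Fin (n + 1)) :
    (Matrix.vandermonde v).det = (-1) ^ (j : ℕ) * (∏ k, (v (j.succAbove k) - v j)) *
      (Matrix.vandermonde (v ∘ j.succAbove)).det := by
  have h := Matrix.det_permute j.cycleRange.symm (Matrix.vandermonde v)
  have h2 : (Matrix.vandermonde v).submatrix j.cycleRange.symm id =
      Matrix.vandermonde (Fin.cons (v j) (v ∘ j.succAbove)) := by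
    rw [← comp_cycleRange_symm]; rfl
  rw [h2, det_vandermonde_cons, Equiv.Perm.sign_symm, Fin.sign_cycleRange] at h
  simp only [Function.comp_apply] at h
  rw [mul_assoc, h]
  push_cast
  rw [← mul_assoc, ← mul_pow]
  simp

end izergin

section izerginKorepin
variable {K : Type*} [Field K]
open Polynomial

/-- The basic quadratic weight in the Izergin–Korepin determinant. -/
def pairWeight {R : Type*} [CommRing R] (p r s : R) : R := (r - s) * (p * r - s)

/-- The Izergin–Korepin matrix. -/
def ikMatrix (p : K) {n : ℕ} (u v : Fin n → K) : Matrix (Fin n) (Fin n) K :=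
  Matrix.of fun i j => (pairWeight p (u i) (v j))⁻¹

lemma prod_mul_det_ikMatrix_cons (p : K) {n : ℕ} (u : Fin n → K) (v : Fin (n + 1) → K) (r : K)
    (hr : ∀ j, pairWeight p r (v j) ≠ 0) :
    (∏ j, pairWeight p r (v j)) * (ikMatrix p (Fin.cons r u) v).det =
      ∑ j : Fin (n + 1), (-1) ^ (j : ℕ) * (ikMatrix p u (v ∘ j.succAbove)).det *
        ∏ k, pairWeight p r (v (j.succAbove k)) := by
  rw [Matrix.det_succ_row_zero, Finset.mul_sum]
  refine Finset.sum_congr rfl fun j _ => ?_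
  have h : (ikMatrix p (Fin.cons r u) v).submatrix Fin.succ j.succAbove =
      ikMatrix p u (v ∘ j.succAbove) := rfl
  rw [h, Fin.prod_univ_succAbove _ j]
  have h0 : ikMatrix p (Fin.cons r u) v 0 j = (pairWeight p r (v j))⁻¹ := rfl
  rw [h0]
  have := hr j
  field_simp

theorem izergin_korepin (p : K) {n : ℕ} : ∀ (u v : Fin n → K), Function.Injective u →
    Function.Injective v → (∀ i j, pairWeight p (u i) (v j) ≠ 0) →
    (∀ i j, p * v i - v j ≠ 0) →
    dwbc p u v * (Matrix.vandermonde u).det * (Matrix.vandermonde (-v)).det =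
      (∏ i, ∏ j, pairWeight p (u i) (v j)) * (ikMatrix p u v).det := by
  induction n with
  | zero =>
    intro u v _ _ _ _
    have : IsASM (fun _ _ => 0 : Fin 0 → Fin 0 → ℤ) := by
      rw [isASM_iff]
      exact ⟨fun i => i.elim0, fun i => i.elim0, fun i => i.elim0, fun i => i.elim0⟩
    have h2 : asmSet 0 = {fun _ _ => 0} := by
      ext A
      rw [mem_asmSet, mem_singleton]
      have : A = fun _ _ => 0 := by funext i; exact i.elim0
      subst this
      simpa using this
    simp [dwbc, partFun, h2]
  | succ n ih =>
    intro u0 v hu hv huv hpv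
    obtain ⟨r0, u, rfl⟩ : ∃ r u, u0 = Fin.cons r u := ⟨u0 0, Fin.tail u0, (Fin.cons_self_tail u0).symm⟩
    have huv' : ∀ i j, pairWeight p (u i) (v j) ≠ 0 := fun i j => huv i.succ j
    have hu' : Function.Injective u := fun a b h => by
      simpa using @hu a.succ b.succ (by simpa using h)
    set D := ∏ i, ∏ j, pairWeight p (u i) (v j) with hD
    set P : K[X] := dwbc (C p) (Fin.cons X (fun i => C (u i)) : Fin (n + 1) → K[X])
      (fun j => C (v j)) * (∏ i, (C (u i) - X)) *
      C ((Matrix.vandermonde u).det * (Matrix.vandermonde (-v)).det) with hP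
    set Q : K[X] := ∑ j : Fin (n + 1),
      C ((-1) ^ (j : ℕ) * (ikMatrix p u (v ∘ j.succAbove)).det * D) *
      ∏ k, ((X - C (v (j.succAbove k))) * (C p * X - C (v (j.succAbove k)))) with hQ
    have evP : ∀ r, P.eval r = dwbc p (Fin.cons r u : Fin (n + 1) → K) v *
        (∏ i, (u i - r)) * ((Matrix.vandermonde u).det * (Matrix.vandermonde (-v)).det) := by
      intro r
      rw [hP, eval_mul, eval_mul, eval_dwbc_cons, eval_prod, eval_C]
      simp
    have evQ : ∀ r, Q.eval r = D * ∑ j : Fin (n + 1), (-1) ^ (j : ℕ) *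
        (ikMatrix p u (v ∘ j.succAbove)).det * ∏ k, pairWeight p r (v (j.succAbove k)) := by
      intro r
      rw [hQ, eval_finsetSum, Finset.mul_sum]
      refine Finset.sum_congr rfl fun j _ => ?_
      rw [eval_mul, eval_C, eval_prod]
      simp only [eval_mul, eval_sub, eval_X, eval_C, pairWeight]
      ring
    have hPQ : P = Q := by
      refine Polynomial.eq_of_natDegree_lt_card_of_eval_eq P Q (f := Sum.elim v u) ?_ ?_ ?_
      · refine hv.sumElim hu' fun j i h => huv' i j ?_
        simp [pairWeight, h]
      · rintro (j | i)
        · simp only [Sum.elim_inl]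
          rw [evP, evQ]
          rw [Finset.sum_eq_single j]
          · have h1 := dwbc_comp_perm p (Fin.cons (v j) u) v j.cycleRange.symm hpv
            rw [comp_cycleRange_symm, dwbc_freeze] at h1
            have h2 := ih u (v ∘ j.succAbove) hu' (hv.comp j.succAbove_right_injective)
              (fun i k => huv' i _) (fun _ _ => hpv _ _)
            have h3 := det_vandermonde_eq_succAbove (-v) j
            have h4 : (-v) ∘ j.succAbove = -(v ∘ j.succAbove) := rfl
            rw [h4] at h3
            have hD2 : D = (∏ i, pairWeight p (u i) (v j)) *
                ∏ i, ∏ k, pairWeight p (u i) ((v ∘ j.succAbove) k) := by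
              rw [hD, ← Finset.prod_mul_distrib]
              exact Finset.prod_congr rfl fun i _ => Fin.prod_univ_succAbove _ j
            have h5 : (∏ k, ((-v) (j.succAbove k) - (-v) j)) * ∏ k, (p * v j - (v ∘ j.succAbove) k)
                = ∏ k, pairWeight p (v j) (v (j.succAbove k)) := by
              rw [← Finset.prod_mul_distrib]
              refine Finset.prod_congr rfl fun k _ => ?_
              simp only [Pi.neg_apply, Function.comp_apply, pairWeight]
              ring
            have h6 : (∏ i, (u i - v j)) * ∏ i, (p * u i - v j) =
                ∏ i, pairWeight p (u i) (v j) := by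
              rw [← Finset.prod_mul_distrib]
              rfl
            rw [← h1, h3, hD2, ← h5, ← h6]
            linear_combination ((∏ j_1, (p * v j - (v ∘ j.succAbove) j_1)) *
              (∏ i, (p * u i - v j)) * (∏ i, (u i - v j)) * (-1) ^ (j : ℕ) *
              (∏ k, ((-v) (j.succAbove k) - (-v) j))) * h2
          · intro j' _ hj'
            obtain ⟨k, hk⟩ := Fin.exists_succAbove_eq hj'.symm
            rw [Finset.prod_eq_zero (mem_univ k) (by rw [hk]; simp [pairWeight]), mul_zero]
          · simp
        · simp only [Sum.elim_inr]
          rw [evP, evQ, Finset.prod_eq_zero (mem_univ i) (sub_self _),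
            ← prod_mul_det_ikMatrix_cons p u v (u i) (huv' i)]
          have h : (ikMatrix p (Fin.cons (u i) u) v).det = 0 :=
            Matrix.det_zero_of_row_eq (Fin.succ_ne_zero i).symm rfl
          simp [h]
      · have e : Fintype.card (Fin (n + 1) ⊕ Fin n) = 2 * n + 1 := by simp; ring
        rw [e, Nat.lt_succ_iff, max_le_iff]
        constructor
        · refine natDegree_mul_C_le _ _ |>.trans (natDegree_mul_le.trans ?_)
          rw [two_mul]
          refine add_le_add (natDegree_dwbc_le p u v) ?_
          refine (natDegree_prod_le _ _).trans
            ((Finset.sum_le_card_nsmul _ _ 1 fun k _ => ?_).trans (by simp))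
          compute_degree
        · refine natDegree_sum_le_of_forall_le _ _ fun j _ => ?_
          refine (natDegree_C_mul_le _ _).trans ?_
          refine (natDegree_prod_le _ _).trans
            ((Finset.sum_le_card_nsmul _ _ 2 fun k _ => ?_).trans (by simp [mul_comm]))
          compute_degree
    have hfin := congrArg (Polynomial.eval r0) hPQ
    rw [evP, evQ, ← prod_mul_det_ikMatrix_cons p u v r0 (fun j => huv 0 j)] at hfin
    rw [Fin.prod_univ_succ, det_vandermonde_cons]
    simp only [Fin.cons_zero, Fin.cons_succ]
    rw [← hD]
    linear_combination hfin

end izerginKorepin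

section jacobi

/-- Jacobi's identity for complementary minors of the adjugate. -/
theorem det_mul_det_toBlocks₁₁_adjugate {m n R : Type*} [Fintype m] [Fintype n] [DecidableEq m]
    [DecidableEq n] [CommRing R] (M : Matrix (m ⊕ n) (m ⊕ n) R) :
    M.det * M.adjugate.toBlocks₁₁.det = M.det ^ Fintype.card m * M.toBlocks₂₂.det := by
  have h1 : M * Matrix.fromBlocks M.adjugate.toBlocks₁₁ 0 M.adjugate.toBlocks₂₁ 1 =
      Matrix.fromBlocks (M.det • 1) M.toBlocks₁₂ 0 M.toBlocks₂₂ := by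
    have h : Matrix.fromBlocks M.toBlocks₁₁ M.toBlocks₁₂ M.toBlocks₂₁ M.toBlocks₂₂ *
        Matrix.fromBlocks M.adjugate.toBlocks₁₁ M.adjugate.toBlocks₁₂ M.adjugate.toBlocks₂₁
          M.adjugate.toBlocks₂₂ = M.det • 1 := by
      rw [Matrix.fromBlocks_toBlocks, Matrix.fromBlocks_toBlocks, Matrix.mul_adjugate]
    rw [Matrix.fromBlocks_multiply, ← Matrix.fromBlocks_one, Matrix.fromBlocks_smul,
      Matrix.fromBlocks_inj] at h
    nth_rw 1 [← M.fromBlocks_toBlocks]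
    rw [Matrix.fromBlocks_multiply]
    rw [h.1, h.2.2.1]
    simp
  have h2 := congrArg Matrix.det h1
  rwa [Matrix.det_mul, Matrix.det_fromBlocks_zero₁₂, Matrix.det_fromBlocks_zero₂₁, Matrix.det_one,
    mul_one, Matrix.det_smul, Matrix.det_one, mul_one] at h2

lemma desnanot_jacobi_of_det_ne_zero {n : ℕ} {R : Type*} [CommRing R] [IsDomain R]
    (M : Matrix (Fin (n + 2)) (Fin (n + 2)) R) (hM : M.det ≠ 0) :
    M.det * (M.submatrix (fun i : Fin n => i.succ.succ) fun j => j.succ.succ).det =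
      (M.submatrix Fin.succ Fin.succ).det *
        (M.submatrix (Fin.succAbove 1) (Fin.succAbove 1)).det -
      (M.submatrix Fin.succ (Fin.succAbove 1)).det *
        (M.submatrix (Fin.succAbove 1) Fin.succ).det := by
  let e : Fin 2 ⊕ Fin n ≃ Fin (n + 2) := finSumFinEquiv.trans (finCongr (add_comm 2 n))
  have h := det_mul_det_toBlocks₁₁_adjugate (M.submatrix e e)
  rw [Matrix.det_submatrix_equiv_self, Matrix.adjugate_submatrix_equiv_self, Fintype.card_fin,
    sq, mul_assoc] at h
  have h := mul_left_cancel₀ hM h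
  have e0 : e (Sum.inl 0) = 0 := by ext; simp [e]
  have e1 : e (Sum.inl 1) = 1 := by ext; simp [e]
  have e2 : (M.submatrix e e).toBlocks₂₂ =
      M.submatrix (fun i : Fin n => i.succ.succ) fun j => j.succ.succ := by
    have : ∀ i : Fin n, e (Sum.inr i) = i.succ.succ := fun i => by ext; simp [e]
    ext i j
    simp [Matrix.toBlocks₂₂, this]
  rw [← e2, ← h, Matrix.det_fin_two]
  simp only [Matrix.toBlocks₁₁, Matrix.submatrix_apply, Matrix.of_apply, e0, e1,
    Matrix.adjugate_fin_succ_eq_det_submatrix, Fin.succAbove_zero]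
  simp
  ring

/-- The Desnanot–Jacobi identity. -/
theorem desnanot_jacobi {n : ℕ} {R : Type*} [CommRing R]
    (M : Matrix (Fin (n + 2)) (Fin (n + 2)) R) :
    M.det * (M.submatrix (fun i : Fin n => i.succ.succ) fun j => j.succ.succ).det =
      (M.submatrix Fin.succ Fin.succ).det *
        (M.submatrix (Fin.succAbove 1) (Fin.succAbove 1)).det -
      (M.submatrix Fin.succ (Fin.succAbove 1)).det *
        (M.submatrix (Fin.succAbove 1) Fin.succ).det := by
  have h := desnanot_jacobi_of_det_ne_zero (n := n) (Matrix.mvPolynomialX _ _ ℤ)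
    (Matrix.det_mvPolynomialX_ne_zero _ ℤ)
  let f := MvPolynomial.eval₂Hom (Int.castRingHom R) fun q : Fin (n + 2) × Fin (n + 2) => M q.1 q.2
  have hf : (Matrix.mvPolynomialX _ _ ℤ).map f = M := by
    ext i j
    simp [f, Matrix.mvPolynomialX]
  have := congrArg f h
  simpa only [map_sub, map_mul, RingHom.map_det, RingHom.mapMatrix_apply,
    ← Matrix.submatrix_map, hf] using this

end jacobi

section quadratic
variable {K : Type*} [Field K]

lemma dwbc_quadratic_of_injective (p : K) {n : ℕ} (r s α β : K) (U V : Fin n → K)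
    (hu : Function.Injective (Fin.cons r (Fin.cons s U) : Fin (n + 2) → K))
    (hv : Function.Injective (Fin.cons α (Fin.cons β V) : Fin (n + 2) → K))
    (huv : ∀ i j : Fin (n + 2), pairWeight p ((Fin.cons r (Fin.cons s U) : Fin (n + 2) → K) i)
      ((Fin.cons α (Fin.cons β V) : Fin (n + 2) → K) j) ≠ 0)
    (hpv : ∀ i j, p * (Fin.cons α (Fin.cons β V) : Fin (n + 2) → K) i -
      (Fin.cons α (Fin.cons β V) : Fin (n + 2) → K) j ≠ 0) :
    (r - s) * (β - α) * dwbc p (Fin.cons r (Fin.cons s U) : Fin (n + 2) → K)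
        (Fin.cons α (Fin.cons β V)) * dwbc p U V =
      pairWeight p r β * pairWeight p s α *
        dwbc p (Fin.cons s U : Fin (n + 1) → K) (Fin.cons β V) *
        dwbc p (Fin.cons r U : Fin (n + 1) → K) (Fin.cons α V) -
      pairWeight p s β * pairWeight p r α *
        dwbc p (Fin.cons s U : Fin (n + 1) → K) (Fin.cons α V) *
        dwbc p (Fin.cons r U : Fin (n + 1) → K) (Fin.cons β V) := by
  set u : Fin (n + 2) → K := Fin.cons r (Fin.cons s U) with hu_def
  set v : Fin (n + 2) → K := Fin.cons α (Fin.cons β V) with hv_def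
  have es : u ∘ Fin.succ = Fin.cons s U := rfl
  have eβ : v ∘ Fin.succ = Fin.cons β V := rfl
  have h1 : ∀ a b (W : Fin n → K), (Fin.cons a (Fin.cons b W) : Fin (n + 2) → K) ∘
      (Fin.succAbove 1) = Fin.cons a W := by
    intro a b W
    funext i
    refine Fin.cases ?_ (fun i => ?_) i
    · simp
    · simp
  have er : u ∘ Fin.succAbove 1 = Fin.cons r U := h1 _ _ _
  have eα : v ∘ Fin.succAbove 1 = Fin.cons α V := h1 _ _ _
  have ik : ∀ {m : ℕ} (f g : Fin m → Fin (n + 2)), Function.Injective f → Function.Injective g →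
      dwbc p (u ∘ f) (v ∘ g) * (Matrix.vandermonde (u ∘ f)).det *
        (Matrix.vandermonde (-(v ∘ g))).det =
      (∏ i, ∏ j, pairWeight p (u (f i)) (v (g j))) * ((ikMatrix p u v).submatrix f g).det :=
    fun f g hf hg => izergin_korepin p (u ∘ f) (v ∘ g) (hu.comp hf) (hv.comp hg)
      (fun _ _ => huv _ _) (fun _ _ => hpv _ _)
  have hs := Fin.succ_injective (n + 1)
  have ha := Fin.succAbove_right_injective (p := (1 : Fin (n + 2)))
  have i1 := ik id id Function.injective_id Function.injective_id
  have i2 := ik (fun i : Fin n => i.succ.succ) (fun j : Fin n => j.succ.succ)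
    (fun a b h => by simpa using h) (fun a b h => by simpa using h)
  have i3 := ik _ _ hs hs
  have i4 := ik _ _ ha ha
  have i5 := ik _ _ hs ha
  have i6 := ik _ _ ha hs
  have hJ := desnanot_jacobi (ikMatrix p u v)
  have c0 : (u ∘ fun i : Fin n => i.succ.succ) = U := rfl
  have c0' : (v ∘ fun i : Fin n => i.succ.succ) = V := rfl
  have n1 : -(v ∘ id) = Fin.cons (-α) (Fin.cons (-β) (-V)) := by
    funext i
    refine Fin.cases ?_ (fun i => Fin.cases ?_ (fun i => ?_) i) i <;> rfl
  have n2 : -(Fin.cons β V : Fin (n + 1) → K) = Fin.cons (-β) (-V) := by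
    funext i
    refine Fin.cases ?_ (fun i => ?_) i <;> rfl
  have n3 : -(Fin.cons α V : Fin (n + 1) → K) = Fin.cons (-α) (-V) := by
    funext i
    refine Fin.cases ?_ (fun i => ?_) i <;> rfl
  have u0 : u ∘ id = Fin.cons r (Fin.cons s U) := rfl
  have v0 : v ∘ id = Fin.cons α (Fin.cons β V) := rfl
  rw [n1, u0, v0, Matrix.submatrix_id_id] at i1
  rw [c0, c0'] at i2
  rw [es, eβ, n2] at i3
  rw [er, eα, n3] at i4
  rw [es, eα, n3] at i5
  rw [er, eβ, n2] at i6
  generalize ikMatrix p u v = M at i1 i2 i3 i4 i5 i6 hJ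
  simp only [det_vandermonde_cons, Fin.prod_univ_succ, Fin.one_succAbove_zero,
    Fin.one_succAbove_succ, Fin.cons_zero,
    Fin.cons_succ, hu_def, hv_def, id_eq, Finset.prod_mul_distrib] at i1 i2 i3 i4 i5 i6
  have nU : (Matrix.vandermonde U).det ≠ 0 := Matrix.det_vandermonde_ne_zero_iff.2
    (hu.comp ((Fin.succ_injective _).comp (Fin.succ_injective _)))
  have nV : (Matrix.vandermonde (-V)).det ≠ 0 := Matrix.det_vandermonde_ne_zero_iff.2
    (neg_injective.comp (hv.comp ((Fin.succ_injective _).comp (Fin.succ_injective _))))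
  have nr : ∏ i, (U i - r) ≠ 0 := Finset.prod_ne_zero_iff.2 fun i _ => sub_ne_zero.2 fun h =>
    absurd (@hu i.succ.succ 0 (by simpa [hu_def] using h)) (Fin.succ_ne_zero _)
  have ns : ∏ i, (U i - s) ≠ 0 := Finset.prod_ne_zero_iff.2 fun i _ => sub_ne_zero.2 fun h =>
    absurd (@hu i.succ.succ 1 (by simpa [hu_def] using h)) (by simp [Fin.ext_iff])
  have nα : ∏ i, ((-V) i - -α) ≠ 0 := Finset.prod_ne_zero_iff.2 fun i _ => sub_ne_zero.2 fun h =>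
    absurd (@hv i.succ.succ 0 (by simpa [hv_def] using h)) (Fin.succ_ne_zero _)
  have nβ : ∏ i, ((-V) i - -β) ≠ 0 := Finset.prod_ne_zero_iff.2 fun i _ => sub_ne_zero.2 fun h =>
    absurd (@hv i.succ.succ 1 (by simpa [hv_def] using h)) (by simp [Fin.ext_iff])
  clear_value u v
  generalize (Matrix.vandermonde U).det = ΔU at *
  generalize (Matrix.vandermonde (-V)).det = ΔV at *
  generalize ∏ i, (U i - r) = a1 at *
  generalize ∏ i, (U i - s) = a2 at *
  generalize ∏ i, ((-V) i - -α) = a3 at *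
  generalize ∏ i, ((-V) i - -β) = a4 at *
  rw [← hu_def, ← hv_def] at i1
  generalize dwbc p u v = W1 at *
  generalize ∏ x, ∏ y, pairWeight p (U x) (V y) = b0 at *
  generalize ∏ x, pairWeight p (U x) α = b1 at *
  generalize ∏ x, pairWeight p (U x) β = b2 at *
  generalize ∏ x, pairWeight p r (V x) = b3 at *
  generalize ∏ x, pairWeight p s (V x) = b4 at *
  have e1 := congrArg₂ (· * ·) i1 i2
  have e2 := congrArg₂ (· * ·) i3 i4
  have e3 := congrArg₂ (· * ·) i5 i6
  have hG : a1 * a2 * a3 * a4 * ΔU ^ 2 * ΔV ^ 2 ≠ 0 := by positivity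
  refine mul_left_cancel₀ hG ?_
  linear_combination e1 - pairWeight p r β * pairWeight p s α * e2 +
    pairWeight p s β * pairWeight p r α * e3 +
    b0 ^ 2 * b1 * b2 * b3 * b4 * pairWeight p r β * pairWeight p s α * pairWeight p s β *
      pairWeight p r α * hJ

end quadratic

section quadratic
open MvPolynomial

lemma pairWeight_map {R S : Type*} [CommRing R] [CommRing S] (f : R →+* S) (p r s : R) :
    f (pairWeight p r s) = pairWeight (f p) (f r) (f s) := by
  simp [pairWeight]

lemma dwbc_map_comp {R S : Type*} [CommRing R] [CommRing S] (f : R →+* S) (p : R) {n : ℕ}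
    (u v : Fin n → R) : f (dwbc p u v) = dwbc (f p) (f ∘ u) (f ∘ v) :=
  dwbc_map f p u v

/-- The quadratic relation between domain wall partition functions of three consecutive sizes. -/
theorem dwbc_quadratic {R : Type*} [CommRing R] (p : R) {n : ℕ} (r s α β : R) (U V : Fin n → R) :
    (r - s) * (β - α) * dwbc p (Fin.cons r (Fin.cons s U) : Fin (n + 2) → R)
        (Fin.cons α (Fin.cons β V)) * dwbc p U V =
      pairWeight p r β * pairWeight p s α *
        dwbc p (Fin.cons s U : Fin (n + 1) → R) (Fin.cons β V) *
        dwbc p (Fin.cons r U : Fin (n + 1) → R) (Fin.cons α V) -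
      pairWeight p s β * pairWeight p r α *
        dwbc p (Fin.cons s U : Fin (n + 1) → R) (Fin.cons α V) *
        dwbc p (Fin.cons r U : Fin (n + 1) → R) (Fin.cons β V) := by
  let q : MvPolynomial (Option (Fin (n + 2) ⊕ Fin (n + 2))) ℤ := X none
  let u : Fin (n + 2) → MvPolynomial (Option (Fin (n + 2) ⊕ Fin (n + 2))) ℤ := fun i => X (some (Sum.inl i))
  let v : Fin (n + 2) → MvPolynomial (Option (Fin (n + 2) ⊕ Fin (n + 2))) ℤ := fun i => X (some (Sum.inr i))
  let e : MvPolynomial (Option (Fin (n + 2) ⊕ Fin (n + 2))) ℤ →+* ℤ :=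
    eval₂Hom (RingHom.id ℤ) (fun k => k.elim 0 (Sum.elim 0 1))
  let ι := algebraMap (MvPolynomial (Option (Fin (n + 2) ⊕ Fin (n + 2))) ℤ)
    (FractionRing (MvPolynomial (Option (Fin (n + 2) ⊕ Fin (n + 2))) ℤ))
  have hι : Function.Injective ι := IsFractionRing.injective _ _
  have hu : u = Fin.cons (u 0) (Fin.cons (u 1) fun i => u i.succ.succ) := by
    funext i
    refine Fin.cases ?_ (fun i => Fin.cases ?_ (fun i => ?_) i) i <;> rfl
  have hv : v = Fin.cons (v 0) (Fin.cons (v 1) fun i => v i.succ.succ) := by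
    funext i
    refine Fin.cases ?_ (fun i => Fin.cases ?_ (fun i => ?_) i) i <;> rfl
  have hu' : ι ∘ u = Fin.cons (ι (u 0)) (Fin.cons (ι (u 1))
      (ι ∘ fun i => u i.succ.succ)) := by
    rw [← Fin.comp_cons, ← Fin.comp_cons, ← hu]
  have hv' : ι ∘ v = Fin.cons (ι (v 0)) (Fin.cons (ι (v 1))
      (ι ∘ fun i => v i.succ.succ)) := by
    rw [← Fin.comp_cons, ← Fin.comp_cons, ← hv]
  have main := dwbc_quadratic_of_injective (ι q) (ι (u 0))
    (ι (u 1)) (ι (v 0)) (ι (v 1))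
    (ι ∘ fun i => u i.succ.succ) (ι ∘ fun i => v i.succ.succ)
    (hu' ▸ hι.comp fun a b h => by simpa [u] using h)
    (hv' ▸ hι.comp fun a b h => by simpa [v] using h)
    (fun i j => by
      rw [← hu', ← hv', Function.comp_apply, Function.comp_apply, ← pairWeight_map,
        Ne, map_eq_zero_iff _ hι]
      intro h
      have := congrArg e h
      simp [e, q, u, v, pairWeight] at this)
    (fun i j => by
      rw [← hv', Function.comp_apply, Function.comp_apply, ← map_mul, ← map_sub,
        Ne, map_eq_zero_iff _ hι]
      intro h
      have := congrArg e h
      simp [e, q, v] at this)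
  simp only [← Fin.comp_cons, ← dwbc_map_comp, ← pairWeight_map, ← map_mul, ← map_sub] at main
  have main := hι main
  let f : MvPolynomial (Option (Fin (n + 2) ⊕ Fin (n + 2))) ℤ →+* R :=
    eval₂Hom (Int.castRingHom R) (fun k => k.elim p
    (Sum.elim (Fin.cons r (Fin.cons s U)) (Fin.cons α (Fin.cons β V))))
  have main := congrArg f main
  simp only [map_mul, map_sub, dwbc_map_comp, pairWeight_map, Fin.comp_cons] at main
  have h1 : f q = p := by simp [f, q]
  have h2 : f (u 0) = r := by simp [f, u]
  have h3 : f (u 1) = s := by simp [f, u]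
  have h4 : f (v 0) = α := by simp [f, v]
  have h5 : f (v 1) = β := by simp [f, v]
  have h6 : (f ∘ fun i => u i.succ.succ) = U := by funext i; simp [f, u]
  have h7 : (f ∘ fun i => v i.succ.succ) = V := by funext i; simp [f, v]
  rw [h1, h2, h3, h4, h5, h6, h7] at main
  exact main

end quadratic

section statistics

lemma IsASM.transpose {n : ℕ} {A : Fin n → Fin n → ℤ} (hA : IsASM A) :
    IsASM fun i j => A j i :=
  ⟨fun i j => hA.1 j i, fun i j => hA.2.2.1 j i, fun i j => hA.2.1 j i, hA.2.2.2.2, hA.2.2.2.1⟩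

/-- An entry of an alternating sign matrix determines, together with the partial sums, one of the
six vertex configurations. -/
lemma IsASM.cell {n : ℕ} {A : Fin n → Fin n → ℤ} (hA : IsASM A) (i j : Fin n) :
    (A i j = 1 ∧ rowSum A i j = 1 ∧ colSum A i j = 1) ∨
      (A i j = -1 ∧ rowSum A i j = 0 ∧ colSum A i j = 0) ∨
      (A i j = 0 ∧ (rowSum A i j = 0 ∨ rowSum A i j = 1) ∧
        (colSum A i j = 0 ∨ colSum A i j = 1)) := by
  have key : ∀ {m : ℕ} (f : Fin m → ℤ), (∀ j, psum f j = 0 ∨ psum f j = 1) → ∀ j,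
      psum f j - f j = 0 ∨ psum f j - f j = 1 := by
    intro m f hf j
    obtain ⟨k, rfl⟩ : ∃ k, m = k + 1 := ⟨m - 1, by have := j.pos; omega⟩
    refine Fin.cases ?_ (fun j => ?_) j
    · rw [psum_zero]; simp
    · rw [psum_succ_eq_add, add_sub_cancel_right]; exact hf _
  have h := (isASM_iff A).1 hA
  have h1 := h.1 i j
  have h2 := h.2.1 i j
  have h3 := key (A i) (h.1 i) j
  have h4 := key (fun k => A k j) (fun k => h.2.1 k j) i
  change rowSum A i j - A i j = 0 ∨ rowSum A i j - A i j = 1 at h3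
  change colSum A i j - A i j = 0 ∨ colSum A i j - A i j = 1 at h4
  omega

lemma psum_sub_eq_sum_lt {n : ℕ} (f : Fin n → ℤ) (j : Fin n) :
    psum f j - f j = ∑ k, if k < j then f k else 0 := by
  have hj : f j = ∑ k, if k = j then f k else 0 := by simp
  rw [sub_eq_iff_eq_add, psum, Finset.sum_filter, hj, ← Finset.sum_add_distrib]
  refine Finset.sum_congr rfl fun k _ => ?_
  rcases lt_trichotomy k j with h | h | h
  · simp [h, h.le, h.ne]
  · simp [h]
  · simp [h.ne', h.not_gt, h.not_ge]

lemma nuASM_eq_card {n : ℕ} {A : Fin n → Fin n → ℤ} (hA : IsASM A) :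
    nuASM A = (univ.filter fun q : Fin n × Fin n =>
      A q.1 q.2 = 0 ∧ rowSum A q.1 q.2 = 1 ∧ colSum A q.1 q.2 = 1).card := by
  have h : (∑ i : Fin n, ∑ i' : Fin n, ∑ j : Fin n, ∑ j' : Fin n,
      if i < i' ∧ j' ≤ j then A i j * A i' j' else 0) =
      ∑ i', ∑ j, (colSum A i' j - A i' j) * rowSum A i' j := by
    rw [Finset.sum_comm]
    refine Finset.sum_congr rfl fun i' _ => ?_
    rw [Finset.sum_comm]
    refine Finset.sum_congr rfl fun j _ => ?_
    rw [colSum, psum_sub_eq_sum_lt, rowSum, psum, Finset.sum_filter, Finset.sum_mul_sum]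
    refine Finset.sum_congr rfl fun i _ => Finset.sum_congr rfl fun j' _ => ?_
    by_cases h1 : i < i' <;> by_cases h2 : j' ≤ j <;> simp [h1, h2]
  rw [nuASM, h, Finset.card_filter, Fintype.sum_prod_type, ← Int.toNat_natCast (∑ i, _)]
  congr 1
  push_cast
  refine Finset.sum_congr rfl fun i _ => Finset.sum_congr rfl fun j _ => ?_
  rcases hA.cell i j with ⟨h1, h2, h3⟩ | ⟨h1, h2, h3⟩ | ⟨h1, h2 | h2, h3 | h3⟩ <;>
    simp [h1, h2, h3]

lemma rhoT_eq_card {n : ℕ} {A : Fin (n + 1) → Fin (n + 1) → ℤ} (hA : IsASM A) :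
    rhoT A = (univ.filter fun j => A 0 j = 0 ∧ rowSum A 0 j = 0 ∧ colSum A 0 j = 0).card := by
  rw [rhoT]
  congr 1
  refine Finset.filter_congr fun j _ => and_congr_right fun h0 => ?_
  change A 0 j = 0 at h0
  have hc : colSum A 0 j = 0 := by rw [colSum, psum_zero, h0]
  have hn : ∀ k, 0 ≤ A 0 k := fun k => by have := hA.zero_row k; omega
  have ht := hA.2.2.2.1 0
  simp only [hc, and_true]
  change (∃ j', j < j' ∧ A 0 j' = 1) ↔ _
  constructor
  · rintro ⟨k, hk, h1⟩
    have h2 : psum (A 0) j + A 0 k ≤ ∑ k, A 0 k := by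
      rw [← Finset.add_sum_erase _ _ (mem_univ k), add_comm]
      refine add_le_add_right (Finset.sum_le_sum_of_subset_of_nonneg (fun l hl => ?_)
        fun _ _ _ => hn _) _
      rw [mem_filter] at hl
      simpa using (hl.2.trans_lt hk).ne
    have := ((isASM_iff A).1 hA).1 0 j
    change rowSum A 0 j + A 0 k ≤ _ at h2
    omega
  · intro h
    by_contra! hno
    have : ∑ k, A 0 k = rowSum A 0 j := by
      rw [rowSum, psum, Finset.sum_filter]
      refine Finset.sum_congr rfl fun k _ => ?_
      split_ifs with hk
      · rfl
      · exact (hA.zero_row k).resolve_right (hno k (not_le.1 hk))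
    omega

lemma rhoL_eq_card {n : ℕ} {A : Fin (n + 1) → Fin (n + 1) → ℤ} (hA : IsASM A) :
    rhoL A = (univ.filter fun i => A i 0 = 0 ∧ rowSum A i 0 = 0 ∧ colSum A i 0 = 0).card := by
  refine (rhoT_eq_card hA.transpose).trans ?_
  congr 1
  exact Finset.filter_congr fun j _ => and_congr_right fun h0 => and_comm

variable {R : Type*} [CommRing R]

lemma prod_ite_eq_pow_card {ι : Type*} [Fintype ι] (P : ι → Prop) [DecidablePred P] (x : R) :
    ∏ i, (if P i then x else 1) = x ^ (univ.filter P).card := by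
  rw [Finset.prod_ite]; simp

/-- The weights marking the zeros of the first row by `z1` and of the first column by `z2`. -/
def edgeMark (z1 z2 : R) {n : ℕ} (i j : Fin (n + 1)) : R :=
  (if i = 0 then z1 else 1) * (if j = 0 then z2 else 1)

lemma IsASM.prod_vertex {n : ℕ} {A : Fin (n + 1) → Fin (n + 1) → ℤ} (hA : IsASM A)
    (x y z1 z2 : R) :
    ∏ i, ∏ j, vertex x (edgeMark z1 z2 i j) 1 y (A i j) (rowSum A i j) (colSum A i j) =
      x ^ nuASM A * y ^ muASM A * z1 ^ rhoT A * z2 ^ rhoL A := by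
  rw [nuASM_eq_card hA, muASM, rhoT_eq_card hA, rhoL_eq_card hA]
  rw [← prod_ite_eq_pow_card, ← prod_ite_eq_pow_card, ← prod_ite_eq_pow_card, ← prod_ite_eq_pow_card]
  have h2 : ∀ f : Fin (n + 1) → R, ∏ j, f j =
      ∏ j : Fin (n + 1), ∏ i : Fin (n + 1), (if i = 0 then f j else 1) := fun f => by
    refine Finset.prod_congr rfl fun j _ => ?_
    rw [Fin.prod_univ_succ]; simp
  have h1 : ∀ f : Fin (n + 1) → R, ∏ j, f j =
      ∏ i : Fin (n + 1), ∏ j, (if i = 0 then f j else 1) := fun f => by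
    rw [Finset.prod_comm, ← h2]
  rw [h1 fun j => if A 0 j = 0 ∧ _ then z1 else 1, h2 fun j => if A j 0 = 0 ∧ _ then z2 else 1,
    Fintype.prod_prod_type, Fintype.prod_prod_type]
  simp only [← Finset.prod_mul_distrib]
  refine Finset.prod_congr rfl fun i _ => Finset.prod_congr rfl fun j _ => ?_
  have e1 : (if i = 0 then (if A 0 j = 0 ∧ rowSum A 0 j = 0 ∧ colSum A 0 j = 0 then z1 else 1)
      else 1) = if i = 0 ∧ A i j = 0 ∧ rowSum A i j = 0 ∧ colSum A i j = 0 then z1 else 1 := by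
    by_cases h : i = 0 <;> simp [h]
  have e2 : (if j = 0 then (if A i 0 = 0 ∧ rowSum A i 0 = 0 ∧ colSum A i 0 = 0 then z2 else 1)
      else 1) = if j = 0 ∧ A i j = 0 ∧ rowSum A i j = 0 ∧ colSum A i j = 0 then z2 else 1 := by
    by_cases h : j = 0 <;> simp [h]
  rw [e1, e2]
  rcases hA.cell i j with ⟨h1, h2, h3⟩ | ⟨h1, h2, h3⟩ | ⟨h1, h2 | h2, h3 | h3⟩ <;>
    simp [h1, h2, h3, vertex, edgeMark]

lemma Zadj_eq_partFun (n : ℕ) (x y z1 z2 : R) :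
    Zadj (n + 1) x y z1 z2 = partFun (n + 1) (fun _ _ => x) (edgeMark z1 z2) (fun _ _ => 1)
      fun _ _ => y := by
  rw [Zadj, Zqua_eq_sum_asmSet, partFun]
  refine Finset.sum_congr rfl fun A hA => ?_
  rw [(mem_asmSet.1 hA).prod_vertex]
  simp

lemma partFun_transpose (n : ℕ) (a1 a0 b c : Fin n → Fin n → R) :
    partFun n (fun i j => a1 j i) (fun i j => a0 j i) (fun i j => b j i) (fun i j => c j i) =
      partFun n a1 a0 b c := by
  rw [partFun, partFun]
  refine Finset.sum_nbij' (fun A i j => A j i) (fun A i j => A j i)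
    (fun A hA => mem_asmSet.2 (mem_asmSet.1 hA).transpose)
    (fun A hA => mem_asmSet.2 (mem_asmSet.1 hA).transpose) (fun _ _ => rfl) (fun _ _ => rfl) ?_
  intro A _
  rw [Finset.prod_comm]
  refine Finset.prod_congr rfl fun i _ => Finset.prod_congr rfl fun j _ => ?_
  change vertex _ _ _ _ (A j i) (rowSum A j i) (colSum A j i) =
    vertex _ _ _ _ (A j i) (colSum A j i) (rowSum A j i)
  unfold vertex
  by_cases h : rowSum A j i = colSum A j i
  · simp [h]
  · simp [h, Ne.symm h]

lemma Zadj_comm (n : ℕ) (x y z1 z2 : R) :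
    Zadj (n + 1) x y z1 z2 = Zadj (n + 1) x y z2 z1 := by
  rw [Zadj_eq_partFun, Zadj_eq_partFun, ← partFun_transpose]
  congr 1
  funext i j
  exact mul_comm _ _

lemma Zadj_one_left (n : ℕ) (x y z : R) : Zadj (n + 1) x y 1 z = Zsing (n + 1) x y z :=
  Zadj_comm n x y 1 z

lemma Zun_eq_partFun (n : ℕ) (x y : R) :
    Zun n x y = partFun n (fun _ _ => x) (fun _ _ => 1) (fun _ _ => 1) fun _ _ => y := by
  cases n with
  | zero =>
    rw [Zun, Zqua_eq_sum_asmSet, partFun]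
    refine Finset.sum_congr rfl fun A _ => ?_
    simp [nuASM, muASM]
  | succ n =>
    refine (Zadj_eq_partFun n x y 1 1).trans ?_
    congr 1
    funext i j
    simp [edgeMark]

end statistics

section gauge

lemma sum_psum {n : ℕ} (f : Fin n → ℤ) : ∑ j, psum f j = ∑ k : Fin n, (n - k : ℤ) * f k := by
  simp only [psum, Finset.sum_filter]
  rw [Finset.sum_comm]
  refine Finset.sum_congr rfl fun k _ => ?_
  rw [← Finset.sum_filter, Finset.sum_const, Finset.filter_le_eq_Ici, Fin.card_Ici, nsmul_eq_mul,
    Nat.cast_sub k.2.le]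

lemma two_mul_sum_sub (n : ℕ) : 2 * ∑ k : Fin n, (n - k : ℤ) = n * (n + 1) := by
  induction n with
  | zero => simp
  | succ n ih =>
    rw [Fin.sum_univ_succ, mul_add]
    have : ∀ i : Fin n, (((n + 1 : ℕ) : ℤ) - ((i.succ : ℕ) : ℤ)) = n - i := fun i => by
      push_cast [Fin.val_succ]; ring
    rw [Finset.sum_congr rfl fun i _ => this i, ih]
    push_cast [Fin.val_zero]
    ring

lemma IsASM.sum_rowSum {n : ℕ} {A : Fin n → Fin n → ℤ} (hA : IsASM A) :
    ∑ i, ∑ j, rowSum A i j = ∑ k : Fin n, (n - k : ℤ) := by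
  simp only [rowSum, sum_psum]
  rw [Finset.sum_comm]
  refine Finset.sum_congr rfl fun k _ => ?_
  rw [← Finset.mul_sum, hA.2.2.2.2, mul_one]

lemma IsASM.sum_colSum {n : ℕ} {A : Fin n → Fin n → ℤ} (hA : IsASM A) :
    ∑ i, ∑ j, colSum A i j = ∑ k : Fin n, (n - k : ℤ) := by
  rw [Finset.sum_comm]
  exact hA.transpose.sum_rowSum

/-- An alternating sign matrix has as many vertices of type `a1` as of type `a0`. -/
lemma IsASM.card_inversions {n : ℕ} {A : Fin n → Fin n → ℤ} (hA : IsASM A) :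
    (univ.filter fun q : Fin n × Fin n =>
      A q.1 q.2 = 0 ∧ rowSum A q.1 q.2 = 1 ∧ colSum A q.1 q.2 = 1).card =
    (univ.filter fun q : Fin n × Fin n =>
      A q.1 q.2 = 0 ∧ rowSum A q.1 q.2 = 0 ∧ colSum A q.1 q.2 = 0).card := by
  rw [Finset.card_filter, Finset.card_filter, Fintype.sum_prod_type, Fintype.sum_prod_type]
  zify
  rw [← sub_eq_zero]
  have : ∑ i, ∑ j, (rowSum A i j + colSum A i j - A i j - 1) = 0 := by
    simp only [Finset.sum_sub_distrib, Finset.sum_add_distrib, hA.sum_rowSum, hA.sum_colSum,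
      hA.2.2.2.1]
    have := two_mul_sum_sub n
    simp only [Finset.sum_sub_distrib] at this ⊢
    simp at this ⊢
    linarith
  refine Eq.trans ?_ this
  simp only [← Finset.sum_sub_distrib]
  refine Finset.sum_congr rfl fun i _ => Finset.sum_congr rfl fun j _ => ?_
  rcases hA.cell i j with ⟨h1, h2, h3⟩ | ⟨h1, h2, h3⟩ | ⟨h1, h2 | h2, h3 | h3⟩ <;>
    simp [h1, h2, h3]

variable {R : Type*} [CommRing R]

lemma IsASM.prod_vertex_shift {n : ℕ} {A : Fin n → Fin n → ℤ} (hA : IsASM A) (s : R)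
    (a1 a0 b c : Fin n → Fin n → R) :
    ∏ i, ∏ j, vertex (s * a1 i j) (a0 i j) (b i j) (c i j) (A i j) (rowSum A i j) (colSum A i j) =
    ∏ i, ∏ j, vertex (a1 i j) (s * a0 i j) (b i j) (c i j) (A i j) (rowSum A i j)
      (colSum A i j) := by
  have h := congrArg (s ^ ·) hA.card_inversions
  simp only [← prod_ite_eq_pow_card, Fintype.prod_prod_type] at h
  have e1 : ∏ i, ∏ j, vertex (s * a1 i j) (a0 i j) (b i j) (c i j) (A i j) (rowSum A i j)
      (colSum A i j) = (∏ i, ∏ j, if A i j = 0 ∧ rowSum A i j = 1 ∧ colSum A i j = 1 then s else 1) *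
      ∏ i, ∏ j, vertex (a1 i j) (a0 i j) (b i j) (c i j) (A i j) (rowSum A i j)
      (colSum A i j) := by
    simp only [← Finset.prod_mul_distrib]
    refine Finset.prod_congr rfl fun i _ => Finset.prod_congr rfl fun j _ => ?_
    rcases hA.cell i j with ⟨h1, h2, h3⟩ | ⟨h1, h2, h3⟩ | ⟨h1, h2 | h2, h3 | h3⟩ <;>
      simp [h1, h2, h3, vertex]
  have e2 : ∏ i, ∏ j, vertex (a1 i j) (s * a0 i j) (b i j) (c i j) (A i j) (rowSum A i j)
      (colSum A i j) = (∏ i, ∏ j, if A i j = 0 ∧ rowSum A i j = 0 ∧ colSum A i j = 0 then s else 1) *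
      ∏ i, ∏ j, vertex (a1 i j) (a0 i j) (b i j) (c i j) (A i j) (rowSum A i j)
      (colSum A i j) := by
    simp only [← Finset.prod_mul_distrib]
    refine Finset.prod_congr rfl fun i _ => Finset.prod_congr rfl fun j _ => ?_
    rcases hA.cell i j with ⟨h1, h2, h3⟩ | ⟨h1, h2, h3⟩ | ⟨h1, h2 | h2, h3 | h3⟩ <;>
      simp [h1, h2, h3, vertex]
  rw [e1, e2, h]

lemma IsASM.sum_toNat {n : ℕ} {A : Fin n → Fin n → ℤ} (hA : IsASM A) (i : Fin n) :
    ∑ j, (1 - A i j).toNat = n - 1 := by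
  zify [show 1 ≤ n by have := i.pos; omega]
  have : ∀ j, (((1 - A i j).toNat : ℕ) : ℤ) = 1 - A i j := fun j => by
    have := hA.1 i j
    omega
  simp only [this, Finset.sum_sub_distrib, hA.2.2.2.1 i]
  simp

lemma IsASM.prod_vertex_gauge {n : ℕ} {A : Fin n → Fin n → ℤ} (hA : IsASM A) (r s : Fin n → R)
    (a1 a0 b c : Fin n → Fin n → R) :
    ∏ i, ∏ j, vertex (r i * s j * a1 i j) (r i * s j * a0 i j) (r i * s j * b i j)
      ((r i * s j) ^ 2 * c i j) (A i j) (rowSum A i j) (colSum A i j) =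
    (∏ i, r i ^ (n - 1)) * (∏ j, s j ^ (n - 1)) *
      ∏ i, ∏ j, vertex (a1 i j) (a0 i j) (b i j) (c i j) (A i j) (rowSum A i j)
        (colSum A i j) := by
  have h1 : ∏ i, r i ^ (n - 1) = ∏ i, ∏ j, r i ^ (1 - A i j).toNat :=
    Finset.prod_congr rfl fun i _ => by rw [Finset.prod_pow_eq_pow_sum, hA.sum_toNat]
  have h2 : ∏ j, s j ^ (n - 1) = ∏ i, ∏ j, s j ^ (1 - A i j).toNat := by
    rw [Finset.prod_comm]
    exact Finset.prod_congr rfl fun j _ => by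
      rw [Finset.prod_pow_eq_pow_sum, hA.transpose.sum_toNat]
  rw [h1, h2]
  simp only [← Finset.prod_mul_distrib]
  refine Finset.prod_congr rfl fun i _ => Finset.prod_congr rfl fun j _ => ?_
  rcases hA.cell i j with ⟨h1, h2, h3⟩ | ⟨h1, h2, h3⟩ | ⟨h1, h2 | h2, h3 | h3⟩ <;>
    simp [h1, h2, h3, vertex] <;> ring

end gauge

section border
variable {K : Type*} [Field K] {p u v x y : K}

lemma dwbc_const (hB : p * u - v ≠ 0)
    (hx : x * (p * u - v) ^ 2 = p * (u - v) ^ 2) (hy : y * (p * u - v) ^ 2 = (p - 1) ^ 2 * u * v)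
    (n : ℕ) :
    dwbc p (fun _ : Fin n => u) (fun _ => v) = (p * u - v) ^ (n * (n - 1)) * Zun n x y := by
  rw [Zun_eq_partFun, dwbc, partFun, partFun, Finset.mul_sum]
  refine Finset.sum_congr rfl fun M hM => ?_
  rw [mem_asmSet] at hM
  generalize p * u - v = B at *
  generalize u - v = A at *
  have hx' : x = A / B * (p * A / B) := by
    rw [div_mul_div_comm, eq_div_iff (mul_ne_zero hB hB)]
    linear_combination hx
  rw [hx', hM.prod_vertex_shift (A / B) (fun _ _ => p * A / B) (fun _ _ => 1) (fun _ _ => 1)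
    (fun _ _ => y)]
  have hg := hM.prod_vertex_gauge (fun _ => B) (fun _ => 1)
    (fun _ _ => p * A / B) (fun _ _ => A / B * 1) (fun _ _ => 1) (fun _ _ => y)
  have e : (∏ _i : Fin n, B ^ (n - 1)) * (∏ _j : Fin n, (1 : K) ^ (n - 1)) = B ^ (n * (n - 1)) := by
    simp [← pow_mul, mul_comm]
  rw [e] at hg
  rw [← hg]
  refine Finset.prod_congr rfl fun i _ => Finset.prod_congr rfl fun j _ => ?_
  congr 1
  · field_simp
  · field_simp
  · ring
  · rw [← hy]; ring

lemma dwbc_border {u1 v1 z1 z2 : K} (hA : u - v ≠ 0) (hB : p * u - v ≠ 0)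
    (hB1 : p * u1 - v ≠ 0) (hB2 : p * u - v1 ≠ 0)
    (hx : x * (p * u - v) ^ 2 = p * (u - v) ^ 2) (hy : y * (p * u - v) ^ 2 = (p - 1) ^ 2 * u * v)
    (hz1 : z1 * ((u - v) * (p * u1 - v)) = (u1 - v) * (p * u - v))
    (hz2 : z2 * ((u - v) * (p * u - v1)) = (u - v1) * (p * u - v)) (n : ℕ) :
    (u1 - v) * (u - v1) * (dwbc p (Fin.cons u1 fun _ => u : Fin (n + 1) → K)
      (Fin.cons v1 fun _ => v) -
      (p * u1 - v) ^ n * (p * u - v1) ^ n * (p * u - v) ^ (n * (n - 1)) * Zun n x y) =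
    (u - v) * (u1 - v1) * ((p * u1 - v) ^ n * (p * u - v1) ^ n * (p * u - v) ^ (n * (n - 1)) *
      (Zadj (n + 1) x y z1 z2 - Zun n x y)) := by
  have hw := sum_asmSet_filter_eq_one n
    (fun i j => p * ((Fin.cons u1 fun _ => u : Fin (n + 1) → K) i -
      (Fin.cons v1 fun _ => v : Fin (n + 1) → K) j))
    (fun i j => (Fin.cons u1 fun _ => u : Fin (n + 1) → K) i -
      (Fin.cons v1 fun _ => v : Fin (n + 1) → K) j)
    (fun i j => p * (Fin.cons u1 fun _ => u : Fin (n + 1) → K) i -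
      (Fin.cons v1 fun _ => v : Fin (n + 1) → K) j)
    (fun i j => (p - 1) ^ 2 * (Fin.cons u1 fun _ => u : Fin (n + 1) → K) i *
      (Fin.cons v1 fun _ => v : Fin (n + 1) → K) j)
  simp only [Fin.cons_zero, Fin.cons_succ] at hw
  have hc := dwbc_const hB hx hy n
  rw [dwbc] at hc
  rw [hc] at hw
  simp only [Finset.prod_const, Finset.card_univ, Fintype.card_fin] at hw
  have hz := sum_asmSet_filter_eq_one n (fun _ _ => x) (edgeMark z1 z2) (fun _ _ => 1)
    (fun _ _ => y)
  have hem : (fun i j : Fin n => edgeMark z1 z2 i.succ j.succ) = fun _ _ => 1 := by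
    funext i j; simp [edgeMark]
  rw [hem, ← Zun_eq_partFun] at hz
  simp only [Finset.prod_const_one, one_mul] at hz
  rw [← mul_assoc] at hw
  rw [← hw, dwbc, partFun, ← Finset.sum_filter_add_sum_filter_not (asmSet (n + 1))
    (fun A => A 0 0 = 1), add_sub_cancel_left, Zadj_eq_partFun, partFun,
    ← Finset.sum_filter_add_sum_filter_not (asmSet (n + 1)) (fun A => A 0 0 = 1), hz,
    add_sub_cancel_left]
  simp only [Finset.mul_sum]
  refine Finset.sum_congr rfl fun M hM => ?_
  rw [mem_filter, mem_asmSet] at hM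
  obtain ⟨hM, h0⟩ := hM
  have h00 : M 0 0 = 0 ∧ rowSum M 0 0 = 0 ∧ colSum M 0 0 = 0 := by
    have h1 : rowSum M 0 0 = M 0 0 := psum_zero _
    have h2 : colSum M 0 0 = M 0 0 := psum_zero _
    rcases hM.cell 0 0 with h | h | h <;> omega
  have hx' : x = (u - v) / (p * u - v) * (p * (u - v) / (p * u - v)) := by
    rw [div_mul_div_comm, eq_div_iff (mul_ne_zero hB hB)]
    linear_combination hx
  rw [hx', hM.prod_vertex_shift ((u - v) / (p * u - v))
    (fun _ _ => p * (u - v) / (p * u - v)) (edgeMark z1 z2) (fun _ _ => 1) (fun _ _ => y)]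
  have hg := hM.prod_vertex_gauge (Fin.cons (p * u1 - v) fun _ => p * u - v)
    (Fin.cons ((p * u - v1) / (p * u - v)) fun _ => 1)
    (fun _ _ => p * (u - v) / (p * u - v))
    (fun i j => (u - v) / (p * u - v) * edgeMark z1 z2 i j) (fun _ _ => 1) (fun _ _ => y)
  have e : (∏ i : Fin (n + 1), (Fin.cons (p * u1 - v) fun _ => p * u - v :
      Fin (n + 1) → K) i ^ (n + 1 - 1)) * (∏ j : Fin (n + 1),
      (Fin.cons ((p * u - v1) / (p * u - v)) fun _ => 1 : Fin (n + 1) → K) j ^ (n + 1 - 1)) =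
      (p * u1 - v) ^ n * (p * u - v1) ^ n * (p * u - v) ^ (n * (n - 1)) := by
    simp only [Fin.prod_univ_succ, Fin.cons_zero, Fin.cons_succ, add_tsub_cancel_right, one_pow,
      Finset.prod_const, Finset.card_univ, Fintype.card_fin, mul_one]
    rw [div_pow, mul_assoc, mul_assoc]
    congr 1
    rw [mul_div_assoc', div_eq_iff (pow_ne_zero _ hB), mul_comm, mul_assoc, ← pow_add, ← pow_mul]
    congr 2
    cases n with
    | zero => rfl
    | succ n => simp; ring
  rw [e] at hg
  rw [← hg]
  have key : ∀ a : K, ∏ i : Fin (n + 1), ∏ j : Fin (n + 1),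
      (if i = 0 then if j = 0 then a else 1 else 1) = a := fun a => by
    simp
  rw [← key ((u1 - v) * (u - v1)), ← key ((u - v) * (u1 - v1)), ← Finset.prod_mul_distrib,
    ← Finset.prod_mul_distrib]
  refine Finset.prod_congr rfl fun i _ => ?_
  rw [← Finset.prod_mul_distrib, ← Finset.prod_mul_distrib]
  refine Finset.prod_congr rfl fun j _ => ?_
  have hrow : ∀ k, colSum M 0 k = M 0 k := fun k => psum_zero _
  have hcol : ∀ k, rowSum M k 0 = M k 0 := fun k => psum_zero _
  clear hx hw hc hg e hem hz hx'
  generalize hBe : p * u - v = B at *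
  generalize hBe1 : p * u1 - v = B1 at *
  generalize hBe2 : p * u - v1 = B2 at *
  have hAB : (u - v) * B1 ≠ 0 := mul_ne_zero hA hB1
  have hAB' : (u - v) * B2 ≠ 0 := mul_ne_zero hA hB2
  rw [← eq_div_iff hAB] at hz1
  rw [← eq_div_iff hAB'] at hz2
  subst hz1 hz2
  induction i using Fin.cases with
  | zero =>
    induction j using Fin.cases with
    | zero =>
      rw [h00.1, h00.2.1, h00.2.2]
      simp [vertex, edgeMark]
      field_simp
    | succ j =>
      have h := hrow j.succ
      rcases hM.cell 0 j.succ with ⟨h1, h2, h3⟩ | ⟨h1, h2, h3⟩ | ⟨h1, h2, h3⟩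
      · simp [vertex, h1]
      · omega
      · rcases h2 with h2 | h2
        · rw [h, h1, h2]
          simp [vertex, edgeMark, Fin.succ_ne_zero]
          field_simp
        · rw [h, h1, h2]
          simp [vertex, Fin.succ_ne_zero, hBe1]
  | succ i =>
    induction j using Fin.cases with
    | zero =>
      have h := hcol i.succ
      rcases hM.cell i.succ 0 with ⟨h1, h2, h3⟩ | ⟨h1, h2, h3⟩ | ⟨h1, h2, h3⟩
      · simp [vertex, h1]
      · omega
      · rcases h3 with h3 | h3
        · rw [h, h1, h3]
          simp [vertex, edgeMark, Fin.succ_ne_zero]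
          field_simp
        · rw [h, h1, h3]
          simp [vertex, Fin.succ_ne_zero, hBe2]
          field_simp
    | succ j =>
      simp only [Fin.succ_ne_zero, if_false, Fin.cons_succ, edgeMark, one_mul, mul_one]
      congr 1
      · field_simp
      · field_simp
      · linear_combination -hy

lemma dwbc_border_row {u1 z1 : K} (hA : u - v ≠ 0) (hB : p * u - v ≠ 0)
    (hA1 : u1 - v ≠ 0) (hB1 : p * u1 - v ≠ 0)
    (hx : x * (p * u - v) ^ 2 = p * (u - v) ^ 2) (hy : y * (p * u - v) ^ 2 = (p - 1) ^ 2 * u * v)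
    (hz1 : z1 * ((u - v) * (p * u1 - v)) = (u1 - v) * (p * u - v)) (n : ℕ) :
    dwbc p (Fin.cons u1 fun _ => u : Fin (n + 1) → K) (Fin.cons v fun _ => v) =
      (p * u1 - v) ^ n * (p * u - v) ^ n * (p * u - v) ^ (n * (n - 1)) * Zsing (n + 1) x y z1 := by
  have h := dwbc_border (v1 := v) (z2 := 1) hA hB hB1 hB hx hy hz1 (by ring) n
  refine mul_left_cancel₀ (mul_ne_zero hA1 hA) ?_
  have e : Zadj (n + 1) x y z1 1 = Zsing (n + 1) x y z1 := rfl
  rw [e] at h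
  linear_combination h

lemma dwbc_border_col {v1 z2 : K} (hA : u - v ≠ 0) (hB : p * u - v ≠ 0)
    (hA2 : u - v1 ≠ 0) (hB2 : p * u - v1 ≠ 0)
    (hx : x * (p * u - v) ^ 2 = p * (u - v) ^ 2) (hy : y * (p * u - v) ^ 2 = (p - 1) ^ 2 * u * v)
    (hz2 : z2 * ((u - v) * (p * u - v1)) = (u - v1) * (p * u - v)) (n : ℕ) :
    dwbc p (Fin.cons u fun _ => u : Fin (n + 1) → K) (Fin.cons v1 fun _ => v) =
      (p * u - v) ^ n * (p * u - v1) ^ n * (p * u - v) ^ (n * (n - 1)) * Zsing (n + 1) x y z2 := by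
  have h := dwbc_border (u1 := u) (z1 := 1) hA hB hB hB2 hx hy (by ring) hz2 n
  refine mul_left_cancel₀ (mul_ne_zero hA hA2) ?_
  rw [Zadj_one_left] at h
  linear_combination h

end border

section defect
variable {R : Type*} [CommRing R]

/-- The difference of the two sides of the recursion for `Zadj (n + 2)`. -/
noncomputable def zadjDefect (n : ℕ) (x y z1 z2 : R) : R :=
  (z1 - 1) * (z2 - 1) * Zadj (n + 2) x y z1 z2 * Zun n x y -
    (y * z1 * z2 * Zadj (n + 1) x y z1 z2 * Zun (n + 1) x y +
      (x * (z1 - 1) * (z2 - 1) - y) * z1 * z2 * Zsing (n + 1) x y z1 * Zsing (n + 1) x y z2 +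
      (z1 - 1) * (z2 - 1) * Zun (n + 1) x y * Zun n x y)

lemma map_Zqua {S : Type*} [CommRing S] (f : R →+* S) (n : ℕ) (x y z1 z2 z3 z4 : R) :
    f (Zqua n x y z1 z2 z3 z4) = Zqua n (f x) (f y) (f z1) (f z2) (f z3) (f z4) := by
  simp only [Zqua, map_sum]
  refine Finset.sum_congr rfl fun e _ => ?_
  split_ifs <;> simp

lemma map_zadjDefect {S : Type*} [CommRing S] (f : R →+* S) (n : ℕ) (x y z1 z2 : R) :
    f (zadjDefect n x y z1 z2) = zadjDefect n (f x) (f y) (f z1) (f z2) := by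
  simp [zadjDefect, Zadj, Zun, Zsing, map_Zqua]

end defect

lemma zadjDefect_eq_zero_of_parametrization {K : Type*} [Field K] {p u v u1 v1 x y z1 z2 : K}
    (hA : u - v ≠ 0) (hB : p * u - v ≠ 0) (hA1 : u1 - v ≠ 0) (hB1 : p * u1 - v ≠ 0)
    (hA2 : u - v1 ≠ 0) (hB2 : p * u - v1 ≠ 0) (hA12 : u1 - v1 ≠ 0)
    (hx : x * (p * u - v) ^ 2 = p * (u - v) ^ 2) (hy : y * (p * u - v) ^ 2 = (p - 1) ^ 2 * u * v)
    (hz1 : z1 * ((u - v) * (p * u1 - v)) = (u1 - v) * (p * u - v))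
    (hz2 : z2 * ((u - v) * (p * u - v1)) = (u - v1) * (p * u - v)) (n : ℕ) :
    zadjDefect n x y z1 z2 = 0 := by
  have hq := dwbc_quadratic p u1 u v1 v (fun _ : Fin n => u) fun _ => v
  have hc : ∀ (a : K) (m : ℕ), (Fin.cons a fun _ => a : Fin (m + 1) → K) = fun _ => a :=
    fun a m => by funext i; induction i using Fin.cases <;> rfl
  have h2 := dwbc_border hA hB hB1 hB2 hx hy hz1 hz2 (n + 1)
  have h1 := dwbc_border hA hB hB1 hB2 hx hy hz1 hz2 n
  have hr := dwbc_border_row hA hB hA1 hB1 hx hy hz1 n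
  have hs := dwbc_border_col hA hB hA2 hB2 hx hy hz2 n
  have hn := dwbc_const hB hx hy n
  have hn1 := dwbc_const hB hx hy (n + 1)
  have hpow : (p * u - v) ^ ((n + 1) * (n + 1 - 1)) =
      (p * u - v) ^ (n * (n - 1)) * ((p * u - v) ^ n) ^ 2 := by
    rw [← pow_mul, ← pow_add]
    congr 1
    cases n with
    | zero => rfl
    | succ n => simp only [add_tsub_cancel_right]; ring
  rw [hc u n] at hq hs
  rw [hc v n] at hq hr
  rw [hr, hs, hn, hn1, hpow] at hq
  rw [hpow, pow_succ, pow_succ] at h2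
  have hq0 : (p * u - v) ^ (n * (n - 1)) ≠ 0 := pow_ne_zero _ hB
  have hb : (p * u - v) ^ n ≠ 0 := pow_ne_zero _ hB
  have hb1 : (p * u1 - v) ^ n ≠ 0 := pow_ne_zero _ hB1
  have hb2 : (p * u - v1) ^ n ≠ 0 := pow_ne_zero _ hB2
  simp only [pairWeight] at hq
  rw [zadjDefect]
  generalize (p * u - v) ^ (n * (n - 1)) = q at *
  generalize (p * u - v) ^ n = b at *
  generalize (p * u1 - v) ^ n = b1 at *
  generalize (p * u - v1) ^ n = b2 at *
  generalize dwbc p (Fin.cons u1 fun _ => u : Fin (n + 1 + 1) → K) (Fin.cons v1 fun _ => v) = W2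
    at *
  generalize dwbc p (Fin.cons u1 fun _ => u : Fin (n + 1) → K) (Fin.cons v1 fun _ => v) = W1 at *
  generalize Zadj (n + 2) x y z1 z2 = Y2 at *
  generalize Zadj (n + 1) x y z1 z2 = Y1 at *
  generalize Zun (n + 1) x y = Z1 at *
  generalize Zun n x y = Z0 at *
  generalize Zsing (n + 1) x y z1 = S1 at *
  generalize Zsing (n + 1) x y z2 = S2 at *
  clear hr hs hn hn1 hpow hc
  have key : (u1 - u) * (v - v1) * (p * u1 - v) * (p * u - v1) *
      ((u1 - v) * (u - v1) * Z1 + (u - v) * (u1 - v1) * (Y2 - Z1)) * Z0 =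
      (u1 - v) * (p * u1 - v) * (u - v1) * (p * u - v1) * Z1 *
        ((u1 - v) * (u - v1) * Z0 + (u - v) * (u1 - v1) * (Y1 - Z0)) -
      (u - v) * (p * u - v) * (u1 - v1) * (p * u1 - v1) * (u1 - v) * (u - v1) * S1 * S2 := by
    refine mul_left_cancel₀ (mul_ne_zero (mul_ne_zero (pow_ne_zero 2 hq0) (pow_ne_zero 2 hb))
      (mul_ne_zero hb1 hb2)) ?_
    linear_combination (u1 - v) * (u - v1) * hq - (u1 - u) * (v - v1) * q * Z0 * h2 +
      (u1 - v) * (p * u1 - v) * (u - v1) * (p * u - v1) * q * b ^ 2 * Z1 * h1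
  clear hq h1 h2 hq0 hb hb1 hb2 W1 W2
  have e1 : (z1 - 1) * ((u - v) * (p * u1 - v)) = (p - 1) * v * (u1 - u) := by
    linear_combination hz1
  have e2 : (z2 - 1) * ((u - v) * (p * u - v1)) = (p - 1) * u * (v - v1) := by
    linear_combination hz2
  have e12 : (z1 - 1) * (z2 - 1) * ((u - v) ^ 2 * (p * u1 - v) * (p * u - v1)) =
      y * (p * u - v) ^ 2 * ((u1 - u) * (v - v1)) := by
    rw [hy]
    linear_combination (z2 - 1) * ((u - v) * (p * u - v1)) * e1 + (p - 1) * v * (u1 - u) * e2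
  have ez : z1 * z2 * ((u - v) ^ 2 * (p * u1 - v) * (p * u - v1)) =
      (u1 - v) * (u - v1) * (p * u - v) ^ 2 := by
    linear_combination z2 * ((u - v) * (p * u - v1)) * hz1 + (u1 - v) * (p * u - v) * hz2
  have ex : (x * (z1 - 1) * (z2 - 1) - y) * ((p * u1 - v) * (p * u - v1)) =
      - y * (p * u - v) * (p * u1 - v1) := by
    refine mul_left_cancel₀ (mul_ne_zero (pow_ne_zero 2 hA) (pow_ne_zero 2 hB)) ?_
    linear_combination (p * u - v) ^ 2 * x * e12 + y * (p * u - v) ^ 2 * ((u1 - u) * (v - v1)) * hx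
  refine mul_left_cancel₀ (mul_ne_zero (mul_ne_zero (pow_ne_zero 3 hA) hA12)
    (mul_ne_zero (pow_ne_zero 2 hB1) (pow_ne_zero 2 hB2))) ?_
  linear_combination (u - v) * (u1 - v1) * (p * u1 - v) * (p * u - v1) * (Y2 * Z0 - Z1 * Z0) * e12
    - (u - v) * (u1 - v1) * (p * u1 - v) * (p * u - v1) * y * Y1 * Z1 * ez
    - (u - v) * (u1 - v1) * (u - v) ^ 2 * (p * u1 - v) * (p * u - v1) * z1 * z2 * S1 * S2 * ex
    + y * (p * u - v) * (p * u1 - v1) * (u - v) * (u1 - v1) * S1 * S2 * ez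
    + y * (p * u - v) ^ 2 * key

open MvPolynomial in
lemma zadjDefect_complex_param (n : ℕ) (d e z1 z2 : ℂ) :
    zadjDefect n (d * e) ((1 - d) * (1 - e)) z1 z2 = 0 := by
  let D : MvPolynomial (Fin 4) ℂ := X 0
  let E : MvPolynomial (Fin 4) ℂ := X 1
  let W : MvPolynomial (Fin 4) ℂ := X 2
  let Z : MvPolynomial (Fin 4) ℂ := X 3
  let Q : MvPolynomial (Fin 4) ℂ := D * (1 - D) * (1 - E) * (E - D) * W * Z *
    (1 - E * W) * (1 - D * Z) *
    ((1 - E) * (1 - D * W) * (1 - D * Z) - (1 - D) * (1 - E * Z) * (1 - E * W))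
  have hQ : Q ≠ 0 := fun h => by
    have := congrArg (eval ![2, 3, 1, 1]) h
    simp [Q, D, E, W, Z] at this
    norm_num at this
  have hP : zadjDefect n (D * E) ((1 - D) * (1 - E)) W Z * Q = 0 := by
    refine MvPolynomial.funext fun t => ?_
    rw [map_mul, map_zadjDefect]
    simp only [Q, D, E, W, Z, map_mul, map_sub, map_one, eval_X, map_zero]
    generalize t 0 = d
    generalize t 1 = e
    generalize t 2 = z1
    generalize t 3 = z2
    rw [mul_eq_zero, or_iff_not_imp_right]
    intro h
    simp only [mul_ne_zero_iff, ← ne_eq] at h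
    obtain ⟨⟨⟨⟨⟨⟨⟨⟨hd, h1d⟩, h1e⟩, hed⟩, h1⟩, h2⟩, h3⟩, h4⟩, h5⟩ := h
    have hA : 1 - d - (1 - e) = e - d := by ring
    have hB : e / d * (1 - d) - (1 - e) = (e - d) / d := by field_simp; ring
    have hA1 : (1 - e) * (1 - d * z1) / (1 - e * z1) - (1 - e) =
      (1 - e) * z1 * (e - d) / (1 - e * z1) := by field_simp; ring
    have hB1 : e / d * ((1 - e) * (1 - d * z1) / (1 - e * z1)) - (1 - e) =
      (1 - e) * (e - d) / (d * (1 - e * z1)) := by field_simp; ring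
    have hA2 : 1 - d - (1 - d) * (1 - e * z2) / (1 - d * z2) =
      (1 - d) * z2 * (e - d) / (1 - d * z2) := by field_simp; ring
    have hB2 : e / d * (1 - d) - (1 - d) * (1 - e * z2) / (1 - d * z2) =
      (1 - d) * (e - d) / (d * (1 - d * z2)) := by field_simp; ring
    have hA12 : (1 - e) * (1 - d * z1) / (1 - e * z1) - (1 - d) * (1 - e * z2) / (1 - d * z2) =
      ((1 - e) * (1 - d * z1) * (1 - d * z2) - (1 - d) * (1 - e * z2) * (1 - e * z1)) /
        ((1 - e * z1) * (1 - d * z2)) := by field_simp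
    refine zadjDefect_eq_zero_of_parametrization (p := e / d) (u := 1 - d) (v := 1 - e)
      (u1 := (1 - e) * (1 - d * z1) / (1 - e * z1)) (v1 := (1 - d) * (1 - e * z2) / (1 - d * z2))
      ?_ ?_ ?_ ?_ ?_ ?_ ?_ ?_ ?_ ?_ ?_ n
    · simpa [hA]
    · simp [*]
    · simp [*]
    · simp [*]
    · simp [*]
    · simp [*]
    · simp [*]
    · rw [hA, hB]; field_simp
    · rw [hB]; field_simp
    · rw [hA, hB, hA1, hB1]; field_simp
    · rw [hA, hB, hA2, hB2]; field_simp
  have h := (mul_eq_zero.1 hP).resolve_right hQ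
  have h' := congrArg (eval ![d, e, z1, z2]) h
  rw [map_zadjDefect] at h'
  simpa [D, E, W, Z] using h'

lemma zadjDefect_complex (n : ℕ) (x y z1 z2 : ℂ) : zadjDefect n x y z1 z2 = 0 := by
  obtain ⟨d, hd⟩ := IsAlgClosed.exists_eq_mul_self ((x + 1 - y) ^ 2 - 4 * x)
  have h := zadjDefect_complex_param n ((x + 1 - y + d) / 2) ((x + 1 - y - d) / 2) z1 z2
  have e1 : (x + 1 - y + d) / 2 * ((x + 1 - y - d) / 2) = x := by linear_combination hd / 4
  have e2 : (1 - (x + 1 - y + d) / 2) * (1 - (x + 1 - y - d) / 2) = y := by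
    linear_combination hd / 4
  rwa [e1, e2] at h

open MvPolynomial in
lemma zadjDefect_eq_zero {R : Type*} [CommRing R] (n : ℕ) (x y z1 z2 : R) :
    zadjDefect n x y z1 z2 = 0 := by
  have h : zadjDefect n (X 0 : MvPolynomial (Fin 4) ℤ) (X 1) (X 2) (X 3) = 0 := by
    refine map_injective (Int.castRingHom ℂ) (RingHom.injective_int _) ?_
    refine MvPolynomial.funext fun t => ?_
    rw [map_zadjDefect, map_zadjDefect, zadjDefect_complex, map_zero, map_zero]
  have h' := congrArg (aeval ![x, y, z1, z2] : MvPolynomial (Fin 4) ℤ →ₐ[ℤ] R).toRingHom h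
  rw [map_zadjDefect] at h'
  simpa using h'

/-- Recursion for the adjacent-boundary doubly-refined ASM generating function
(the convention `Z_0(x,y) = 1` holds definitionally: `Zun 0 x y = 1`), stated
for all values of the variables in any commutative ring, equivalently as an
identity of polynomials in `ℤ[x,y,z1,z2]`. -/
theorem stmt2 {R : Type*} [CommRing R] (x y z1 z2 : R) (n : ℕ) (hn : 2 ≤ n) :
    (z1 - 1) * (z2 - 1) * Zadj n x y z1 z2 * Zun (n - 2) x y =
      y * z1 * z2 * Zadj (n - 1) x y z1 z2 * Zun (n - 1) x y
      + (x * (z1 - 1) * (z2 - 1) - y) * z1 * z2 *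
          Zsing (n - 1) x y z1 * Zsing (n - 1) x y z2
      + (z1 - 1) * (z2 - 1) * Zun (n - 1) x y * Zun (n - 2) x y := by
  obtain ⟨m, rfl⟩ := Nat.exists_eq_add_of_le' hn
  exact sub_eq_zero.1 (zadjDefect_eq_zero m x y z1 z2)
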